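/- arXiv:1907.02373 — 8 statements merged into one kernel-verified Lean document; each statement's English description precedes it below -/
import Mathlib

section
/- Let n ≥ 1, q ≥ 1, let X : Matrix (Fin q) (Fin n) (ZMod 2) have linearly independent rows, and let H be the submodule of (Fin n → ZMod 2) spanned by the rows of X. Then for all j, k : Fin n with j ≠ k, the number of v ∈ H with v j + v k = 1 equals 2^(q−1) if and only if the j-th and k-th columns of X are different, i.e., (fun i => X i j) ≠ (fun i => X i k). (Equivalently: the two-factor interaction F_j F_k is estimable from the blocked 2^n factorial iff the corresponding two columns of X differ.) -/
/-!
The map `v ↦ v j + v k` is a linear functional on `H`. If columns `j` and `k` of `X` agree, it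
vanishes on the rows of `X`, hence on `H`, so no `v ∈ H` has `v j + v k = 1`. If they differ in
row `i`, the functional is `1` on that row, and translation by the row exchanges its two level
sets in `H`; each therefore has half of the `2 ^ q` elements of `H`.
-/

/-- Corollary 2: a two-factor interaction `F_j F_k` is estimable from a blocked `2^n`
factorial iff the corresponding two columns of the generator matrix `X` differ. -/
theorem stmt3 (n q : ℕ) (hn : 1 ≤ n) (hq : 1 ≤ q)
    (X : Matrix (Fin q) (Fin n) (ZMod 2))
    (hX : LinearIndependent (ZMod 2) (fun i => X i))
    (H : Submodule (ZMod 2) (Fin n → ZMod 2))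
    (hH : H = Submodule.span (ZMod 2) (Set.range fun i => X i)) :
    ∀ j k : Fin n, j ≠ k →
      (Nat.card {v : Fin n → ZMod 2 // v ∈ H ∧ v j + v k = 1} = 2 ^ (q - 1) ↔
        (fun i => X i j) ≠ (fun i => X i k)) := by
  intro j k _
  have hcard : (H : Set (Fin n → ZMod 2)).ncard = 2 ^ q := by
    have h1 : Nat.card H = Nat.card (ZMod 2) ^ Module.finrank (ZMod 2) H :=
      Module.natCard_eq_pow_finrank
    have h2 : Module.finrank (ZMod 2) H = q := by
      rw [hH, finrank_span_eq_card hX, Fintype.card_fin]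
    rw [h2, Nat.card_zmod] at h1
    exact h1
  constructor
  · intro hc heq
    have hker : ∀ v ∈ H, v j + v k = 0 := by
      intro v hv
      rw [hH] at hv
      induction hv using Submodule.span_induction with
      | mem x hx =>
        obtain ⟨i, rfl⟩ := hx
        have := congrFun heq i
        simp only at this ⊢
        rw [this]
        exact CharTwo.add_self_eq_zero _
      | zero => simp
      | add x y _ _ hx hy =>
        rw [Pi.add_apply, Pi.add_apply, add_add_add_comm, hx, hy, add_zero]
      | smul a x _ hx =>
        rw [Pi.smul_apply, Pi.smul_apply, ← smul_add, hx, smul_zero]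
    have : IsEmpty {v : Fin n → ZMod 2 // v ∈ H ∧ v j + v k = 1} :=
      ⟨fun ⟨v, hv, h1⟩ => zero_ne_one ((hker v hv).symm.trans h1)⟩
    rw [Nat.card_of_isEmpty] at hc
    exact absurd hc.symm (by positivity)
  · intro hne
    obtain ⟨i, hi⟩ := Function.ne_iff.mp hne
    have dich : ∀ a : ZMod 2, a = 0 ∨ a = 1 := by decide
    have hi1 : X i j + X i k = 1 := by
      revert hi
      generalize X i j = a
      generalize X i k = b
      revert a b
      decide
    have hiH : X i ∈ H := hH ▸ Submodule.subset_span ⟨i, rfl⟩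
    have h11 : (1 : ZMod 2) + 1 = 0 := by decide
    set A : Set (Fin n → ZMod 2) := {v | v ∈ H ∧ v j + v k = 1} with hA
    set B : Set (Fin n → ZMod 2) := {v | v ∈ H ∧ v j + v k = 0} with hB
    have hAB : (fun v => v + X i) '' A = B := by
      ext w
      constructor
      · rintro ⟨v, ⟨hv, hv1⟩, rfl⟩
        refine ⟨H.add_mem hv hiH, ?_⟩
        simp only [Pi.add_apply]
        rw [add_add_add_comm, hv1, hi1, h11]
      · rintro ⟨hw, hw0⟩
        refine ⟨w + X i, ⟨H.add_mem hw hiH, ?_⟩, ?_⟩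
        · simp only [Pi.add_apply]
          rw [add_add_add_comm, hw0, hi1, zero_add]
        · funext l
          simp only [Pi.add_apply]
          rw [add_assoc, CharTwo.add_self_eq_zero, add_zero]
    have hBA : B.ncard = A.ncard := by
      rw [← hAB]
      exact Set.ncard_image_of_injective A (add_left_injective (X i))
    have hU : A ∪ B = (H : Set (Fin n → ZMod 2)) := by
      ext v
      constructor
      · rintro (h | h) <;> exact h.1
      · intro h
        rcases dich (v j + v k) with h0 | h1
        · exact Or.inr ⟨h, h0⟩
        · exact Or.inl ⟨h, h1⟩
    have hD : Disjoint A B := Set.disjoint_left.mpr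
      fun v h1 h0 => zero_ne_one (h0.2.symm.trans h1.2)
    have hsum := Set.ncard_union_eq hD (Set.toFinite A) (Set.toFinite B)
    rw [hU, hcard, hBA] at hsum
    obtain ⟨p, rfl⟩ : ∃ p, q = p + 1 := ⟨q - 1, by omega⟩
    change A.ncard = 2 ^ (p + 1 - 1)
    rw [pow_succ] at hsum
    rw [Nat.add_sub_cancel]
    omega
end

section
/- Let q ≥ 1 and n ≥ 1, and let X : Matrix (Fin q) (Fin n) (ZMod 2) be a matrix all of whose columns are nonzero. Write v = n / (2^q − 1) (integer division) and w = n % (2^q − 1). Then the number of unordered pairs {j, k} of distinct indices in Fin n for which the j-th and k-th columns of X differ is at most φ_max = C(n, 2) − v·w − (2^q − 1)·C(v, 2), where C(a, 2) = a(a−1)/2 denotes the binomial coefficient (a choose 2). -/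
/-!
Group the `n` columns by their value: the nonzero vector `s` occurs `c s` times, `∑ s, c s = n`, and
the number of ordered pairs of equal columns is `∑ s, c s ^ 2`. With `m = 2 ^ q - 1` possible values
and `v = n / m`, each integer `c` satisfies `(c - v) * (c - v - 1) ≥ 0`, that is
`c ^ 2 ≥ (2 * v + 1) * c - v * (v + 1)`. Summing this tangent-type bound over the `m` values gives
exactly the sum of squares of the most balanced distribution, hence a lower bound on equal pairs
(`sum_sq_le_card_eq`). The pairs of differing columns are the complement, and swapping the entries
shows that half of the ordered ones are increasing (`two_mul_card_lt_add_card_eq`).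
-/

/-- Ordered pairs either have equal images, or are one of the two orderings of an increasing pair
with different images. -/
lemma two_mul_card_lt_add_card_eq {α : Type*} [DecidableEq α] {n : ℕ} (f : Fin n → α) :
    2 * (Finset.univ.filter (fun p : Fin n × Fin n => p.1 < p.2 ∧ f p.1 ≠ f p.2)).card +
      (Finset.univ.filter (fun p : Fin n × Fin n => f p.1 = f p.2)).card = n ^ 2 := by
  have hswap : (Finset.univ.filter (fun p : Fin n × Fin n => p.2 < p.1 ∧ f p.1 ≠ f p.2)).card =
      (Finset.univ.filter (fun p : Fin n × Fin n => p.1 < p.2 ∧ f p.1 ≠ f p.2)).card := by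
    refine Finset.card_bij (fun p _ => p.swap) ?_ ?_ ?_
    · intro p hp
      simp only [Finset.mem_filter, Finset.mem_univ, true_and, Prod.fst_swap, Prod.snd_swap] at hp ⊢
      exact ⟨hp.1, hp.2.symm⟩
    · intro p _ p' _ h
      exact Prod.swap_injective h
    · intro p hp
      simp only [Finset.mem_filter, Finset.mem_univ, true_and] at hp
      exact ⟨p.swap, by simpa using ⟨hp.1, hp.2.symm⟩, Prod.swap_swap p⟩
  have hunion : Finset.univ.filter (fun p : Fin n × Fin n => f p.1 ≠ f p.2) =
      Finset.univ.filter (fun p : Fin n × Fin n => p.1 < p.2 ∧ f p.1 ≠ f p.2) ∪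
        Finset.univ.filter (fun p : Fin n × Fin n => p.2 < p.1 ∧ f p.1 ≠ f p.2) := by
    ext p
    simp only [Finset.mem_filter, Finset.mem_univ, true_and, Finset.mem_union]
    constructor
    · intro h
      have hne : p.1 ≠ p.2 := fun e => h (congrArg f e)
      rcases lt_or_gt_of_ne hne with h' | h'
      · exact Or.inl ⟨h', h⟩
      · exact Or.inr ⟨h', h⟩
    · rintro (h | h) <;> exact h.2
  have hdisj : Disjoint
      (Finset.univ.filter (fun p : Fin n × Fin n => p.1 < p.2 ∧ f p.1 ≠ f p.2))
      (Finset.univ.filter (fun p : Fin n × Fin n => p.2 < p.1 ∧ f p.1 ≠ f p.2)) := by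
    rw [Finset.disjoint_filter]
    intro p _ h h'
    exact lt_asymm h.1 h'.1
  have hcompl := Finset.card_filter_add_card_filter_not (s := (Finset.univ : Finset (Fin n × Fin n)))
    (fun p : Fin n × Fin n => f p.1 = f p.2)
  have hcard := congrArg Finset.card hunion
  rw [Finset.card_union_of_disjoint hdisj, hswap] at hcard
  simp only [Finset.card_univ, Fintype.card_prod, Fintype.card_fin, ← ne_eq] at hcompl
  rw [hcard] at hcompl
  rw [sq]
  omega

/-- For a map into a set `S`, the number of ordered pairs with equal images is at least the value
attained when all fibres have size `v` or `v + 1`; the bound holds for every integer `v`. -/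
lemma sum_sq_le_card_eq {α : Type*} [DecidableEq α] {n : ℕ} (f : Fin n → α) (S : Finset α)
    (hf : ∀ j, f j ∈ S) (v : ℤ) :
    (2 * v + 1) * n - S.card * (v * (v + 1)) ≤
      ((Finset.univ.filter (fun p : Fin n × Fin n => f p.1 = f p.2)).card : ℤ) := by
  set c : α → ℕ := fun s => (Finset.univ.filter (fun j => f j = s)).card with hc
  have hsum : n = ∑ s ∈ S, c s := by
    have h := Finset.card_eq_sum_card_fiberwise (s := (Finset.univ : Finset (Fin n))) (t := S)
      (f := f) (fun j _ => hf j)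
    simpa using h
  have hsq : (Finset.univ.filter (fun p : Fin n × Fin n => f p.1 = f p.2)).card =
      ∑ s ∈ S, c s ^ 2 := by
    rw [Finset.card_eq_sum_card_fiberwise (t := S) (f := fun p => f p.1) (fun p _ => hf p.1)]
    refine Finset.sum_congr rfl fun s _ => ?_
    rw [sq, hc, ← Finset.card_product]
    congr 1
    ext p
    simp only [Finset.mem_filter, Finset.mem_univ, true_and, Finset.mem_product]
    constructor
    · rintro ⟨h, h'⟩
      exact ⟨h', h ▸ h'⟩
    · rintro ⟨h, h'⟩
      exact ⟨h.trans h'.symm, h⟩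
  have hpt : ∀ s ∈ S, (2 * v + 1) * (c s : ℤ) - v * (v + 1) ≤ (c s : ℤ) ^ 2 := by
    intro s _
    rcases le_or_gt (c s : ℤ) v with h | h
    · nlinarith
    · have h' : v + 1 ≤ (c s : ℤ) := h
      nlinarith
  have hn' : (n : ℤ) = ∑ s ∈ S, (c s : ℤ) := by exact_mod_cast hsum
  have htot := Finset.sum_le_sum hpt
  rw [Finset.sum_sub_distrib, ← Finset.mul_sum, ← hn', Finset.sum_const, nsmul_eq_mul] at htot
  rw [hsq]
  push_cast
  exact htot

/-- Theorem 2: the number of unordered pairs of distinct indices whose columns of the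
generator matrix `X` differ (i.e. the number of estimable two-factor interactions) is
bounded by `φ_max = C(n,2) - v·w - (2^q - 1)·C(v,2)` where `v = n / (2^q - 1)` and
`w = n % (2^q - 1)`. -/
theorem stmt4 (q n : ℕ) (hq : 1 ≤ q) (hn : 1 ≤ n)
    (X : Matrix (Fin q) (Fin n) (ZMod 2))
    (hX : ∀ j : Fin n, (fun i => X i j) ≠ 0) :
    (Finset.univ.filter
        (fun p : Fin n × Fin n =>
          p.1 < p.2 ∧ (fun i => X i p.1) ≠ (fun i => X i p.2))).card ≤
      Nat.choose n 2 - (n / (2 ^ q - 1)) * (n % (2 ^ q - 1)) -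
        (2 ^ q - 1) * Nat.choose (n / (2 ^ q - 1)) 2 := by
  have hpairs := two_mul_card_lt_add_card_eq (fun j : Fin n => (fun i => X i j : Fin q → ZMod 2))
  have hlow := sum_sq_le_card_eq (fun j : Fin n => (fun i => X i j : Fin q → ZMod 2))
    (Finset.univ.erase 0) (fun j => by simpa using hX j) ((n / (2 ^ q - 1) : ℕ) : ℤ)
  have hS : ((Finset.univ : Finset (Fin q → ZMod 2)).erase 0).card = 2 ^ q - 1 := by
    simp [Finset.card_erase_of_mem]
  rw [hS] at hlow
  have hdm := Nat.div_add_mod n (2 ^ q - 1)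
  generalize 2 ^ q - 1 = m at *
  generalize n / m = v at *
  generalize n % m = w at *
  have hchoose : ∀ a : ℕ, (2 : ℤ) * (a.choose 2 : ℕ) = a * (a - 1) := by
    intro a
    have h2 : 2 * a.choose 2 = a * (a - 1) := by
      rw [Nat.choose_two_right]
      exact Nat.mul_div_cancel' (Nat.even_mul_pred_self a).two_dvd
    cases a with
    | zero => simp
    | succ a =>
      have h3 : (2 : ℤ) * ((a + 1).choose 2 : ℕ) = (a + 1 : ℕ) * (a : ℕ) := by exact_mod_cast h2
      rw [h3]
      push_cast
      ring
  have hcn := hchoose n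
  have hcv := hchoose v
  -- Adding the subtracted terms back shows in particular that neither subtraction truncates.
  suffices h : (Finset.univ.filter (fun p : Fin n × Fin n =>
      p.1 < p.2 ∧ (fun i => X i p.1) ≠ (fun i => X i p.2))).card + v * w + m * v.choose 2 ≤
      n.choose 2 by omega
  zify at hpairs hdm ⊢
  have hmul : (2 : ℤ) * (m * (v.choose 2 : ℕ)) = m * (v * (v - 1)) := by rw [← hcv]; ring
  have hvn : (v : ℤ) * n = m * v * v + v * w := by rw [← hdm]; ring
  linarith
end

section
/- Let α be a nonempty finite type with M = Fintype.card α, let m : α → ℕ with ∑_{a} m a = n, and set v = n / M (integer division) and w = n % M. Then the sum over unordered pairs {a, b} of distinct elements of α of m a · m b (equivalently, half of ∑_{(a,b) ∈ offDiag} m a · m b) is at most C(n, 2) − v·w − M·C(v, 2), with equality if and only if m a ∈ {v, v + 1} for every a : α (in which case exactly w elements a have m a = v + 1). Here C(a, 2) = a(a−1)/2. -/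
/-!
Write `v = n / M`, `w = n % M` and `D = ∑ a, (m a - v) * (m a - v - 1)`, computed in `ℤ`. Expanding
`(∑ a, m a) ^ 2` into its diagonal and off-diagonal parts and using `n = M * v + w` gives the
identity (`offDiag_add_defect`)

  `∑_{a ≠ b} m a * m b + D = 2 * (C(n, 2) - v * w - M * C(v, 2))`.

Each term of `D` is a product of two consecutive integers, hence nonnegative, and vanishes exactly
when `m a ∈ {v, v + 1}`. This yields both the bound and the equality case. It also shows that
the right-hand side is nonnegative, so the natural-number subtractions are genuine.
-/

theorem two_mul_choose_two_int (k : ℕ) : (2 * k.choose 2 : ℤ) = k * (k - 1) := by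
  cases k with
  | zero => simp
  | succ k =>
    have h2 : (k + 1).choose 2 * 2 = (k + 1) * k := by
      rw [Nat.choose_two_right, Nat.add_sub_cancel]
      exact Nat.div_mul_cancel (by simpa [mul_comm] using (Nat.even_mul_succ_self k).two_dvd)
    have h3 : (((k + 1).choose 2 * 2 : ℕ) : ℤ) = ((k + 1) * k : ℕ) := by rw [h2]
    push_cast at h3 ⊢
    linarith

theorem consecutive_mul_nonneg (d : ℤ) : 0 ≤ d * (d - 1) := by
  rcases le_or_gt d 0 with h | h
  · exact mul_nonneg_of_nonpos_of_nonpos h (by linarith)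
  · exact mul_nonneg h.le (by linarith)

/-- The off-diagonal sum falls short of its maximum by exactly the defect
`∑ a, (m a - v) * (m a - v - 1)`. -/
theorem offDiag_add_defect {α : Type*} [Fintype α] [DecidableEq α] (m : α → ℕ) (n v w : ℕ)
    (hm : ∑ a, m a = n) (hn : n = Fintype.card α * v + w) :
    ((∑ p ∈ Finset.univ.offDiag, m p.1 * m p.2 : ℕ) : ℤ) +
        ∑ a, ((m a : ℤ) - v) * ((m a : ℤ) - v - 1) =
      2 * ((n.choose 2 : ℤ) - v * w - Fintype.card α * v.choose 2) := by
  have hsq : ((∑ p ∈ (Finset.univ : Finset α).offDiag, m p.1 * m p.2 : ℕ) : ℤ) +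
      ∑ a, (m a : ℤ) * m a = (n : ℤ) * n := by
    have h : ∑ p ∈ (Finset.univ : Finset α).diag, m p.1 * m p.2 +
        ∑ p ∈ (Finset.univ : Finset α).offDiag, m p.1 * m p.2 = n * n := by
      rw [← Finset.sum_union (Finset.disjoint_diag_offDiag _), Finset.diag_union_offDiag,
        Finset.sum_product, ← hm, Finset.sum_mul_sum]
    rw [Finset.sum_diag] at h
    have h' := congrArg (Nat.cast : ℕ → ℤ) h
    push_cast at h' ⊢
    linarith
  have hm' : ∑ a, (m a : ℤ) = n := by exact_mod_cast hm
  have hD : ∑ a, ((m a : ℤ) - v) * ((m a : ℤ) - v - 1) =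
      ∑ a, (m a : ℤ) * m a - (2 * v + 1) * n + Fintype.card α * (v * (v + 1)) := by
    have : ∀ a, ((m a : ℤ) - v) * ((m a : ℤ) - v - 1) =
        (m a : ℤ) * m a - (2 * v + 1) * m a + v * (v + 1) := fun a => by ring
    simp only [this, Finset.sum_add_distrib, Finset.sum_sub_distrib, ← Finset.mul_sum, hm',
      Finset.sum_const, Finset.card_univ, nsmul_eq_mul]
    ring
  have hn_int : (n : ℤ) = Fintype.card α * v + w := by exact_mod_cast hn
  have h1 := two_mul_choose_two_int n
  have h2 := two_mul_choose_two_int v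
  linear_combination hsq + hD - h1 + (Fintype.card α : ℤ) * h2 - 2 * (v : ℤ) * hn_int

/-- The counting principle underlying the bound `φ_max`: for multiplicities `m a`
summing to `n` over a finite type `α` of cardinality `M`, the sum over unordered pairs
of distinct elements of `m a · m b` (i.e. half of the off-diagonal sum) is at most
`C(n,2) - v·w - M·C(v,2)` with `v = n / M`, `w = n % M`, with equality iff every
`m a ∈ {v, v+1}`; in that case exactly `w` elements have `m a = v + 1`. -/
theorem stmt5 (α : Type*) [Fintype α] [DecidableEq α] [Nonempty α]
    (M n : ℕ) (hM : M = Fintype.card α)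
    (m : α → ℕ) (hm : ∑ a : α, m a = n) :
    (∑ p ∈ Finset.univ.offDiag, m p.1 * m p.2) ≤
        2 * (Nat.choose n 2 - (n / M) * (n % M) - M * Nat.choose (n / M) 2) ∧
    ((∑ p ∈ Finset.univ.offDiag, m p.1 * m p.2) =
        2 * (Nat.choose n 2 - (n / M) * (n % M) - M * Nat.choose (n / M) 2) ↔
      ∀ a : α, m a = n / M ∨ m a = n / M + 1) ∧
    ((∀ a : α, m a = n / M ∨ m a = n / M + 1) →
      (Finset.univ.filter (fun a : α => m a = n / M + 1)).card = n % M) := by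
  have hdiv : n = Fintype.card α * (n / M) + n % M := by
    rw [← hM]; exact (Nat.div_add_mod n M).symm
  have key := offDiag_add_defect m n (n / M) (n % M) hm hdiv
  have hterm : ∀ a ∈ Finset.univ, 0 ≤ ((m a : ℤ) - (n / M : ℕ)) * ((m a : ℤ) - (n / M : ℕ) - 1) :=
    fun a _ => consecutive_mul_nonneg _
  have hD0 := Finset.sum_nonneg hterm
  have hDiff := Finset.sum_eq_zero_iff_of_nonneg hterm
  have hiff : (∑ a, ((m a : ℤ) - (n / M : ℕ)) * ((m a : ℤ) - (n / M : ℕ) - 1) = 0) ↔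
      ∀ a : α, m a = n / M ∨ m a = n / M + 1 := by
    rw [hDiff]
    refine forall_congr' fun a => ?_
    simp only [Finset.mem_univ, forall_true_left, mul_eq_zero]
    omega
  rw [← hM] at key hdiv
  rw [← hiff]
  -- Naming the two products keeps the truncated subtraction within linear arithmetic.
  obtain ⟨x, hx⟩ : ∃ x, x = (n / M) * (n % M) := ⟨_, rfl⟩
  obtain ⟨y, hy⟩ : ∃ y, y = M * Nat.choose (n / M) 2 := ⟨_, rfl⟩
  have hx' : ((n / M : ℕ) : ℤ) * (n % M : ℕ) = x := by rw [hx, Nat.cast_mul]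
  have hy' : (M : ℤ) * (Nat.choose (n / M) 2 : ℕ) = y := by rw [hy, Nat.cast_mul]
  rw [hx', hy'] at key
  rw [← hx, ← hy]
  refine ⟨by omega, by omega, ?_⟩
  · intro h
    rw [hiff] at h
    have hsum : ∑ a, m a = M * (n / M) +
        (Finset.univ.filter (fun a : α => m a = n / M + 1)).card := by
      rw [Finset.card_filter, hM, ← Finset.card_univ, ← smul_eq_mul, ← Finset.sum_const,
        ← Finset.sum_add_distrib]
      refine Finset.sum_congr rfl fun a _ => ?_
      rcases h a with h | h <;> simp [h, ← hM]
    omega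
end

section
/- Let 1 ≤ q ≤ n and let G be a simple graph on Fin n (the requirements graph). Then there exists a matrix X : Matrix (Fin q) (Fin n) (ZMod 2) of rank q such that every column of X is nonzero and such that for all j, k with G.Adj j k the j-th and k-th columns of X differ, if and only if G is (2^q − 1)-colorable (i.e., G has chromatic number at most 2^q − 1). -/
/-!
A matrix with nonzero columns that separates adjacent vertices is a proper coloring of `G` by the
`2 ^ q - 1` nonzero vectors of `GF(2) ^ q`, so only the rank condition needs an argument.
Suppose the colors used span a proper subspace `W`. As `dim W < q ≤ n`, the color vectors are
linearly dependent, so some vertex `v` has a color in the span of the others. Recoloring `v` by a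
vector outside `W` keeps the coloring proper (the new color was unused) and enlarges the span
(`exists_coloring_finrank_ge`). Repeating this reaches rank `q`.
-/

/-- Any proper coloring by nonzero vectors can be modified, one vertex at a time, so that the colors
span a subspace of any prescribed dimension `d ≤ q` or more. -/
lemma exists_coloring_finrank_ge {q n : ℕ} (hqn : q ≤ n) (G : SimpleGraph (Fin n))
    (f₀ : Fin n → Fin q → ZMod 2) (h₀ : ∀ j, f₀ j ≠ 0)
    (hadj₀ : ∀ j k, G.Adj j k → f₀ j ≠ f₀ k) (d : ℕ) (hd : d ≤ q) :
    ∃ f : Fin n → Fin q → ZMod 2, (∀ j, f j ≠ 0) ∧ (∀ j k, G.Adj j k → f j ≠ f k) ∧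
      d ≤ Module.finrank (ZMod 2) (Submodule.span (ZMod 2) (Set.range f)) := by
  induction d with
  | zero => exact ⟨f₀, h₀, hadj₀, Nat.zero_le _⟩
  | succ d ih =>
    obtain ⟨f, hf, hadj, hdim⟩ := ih (by omega)
    rcases hdim.lt_or_eq with hlt | heq
    · exact ⟨f, hf, hadj, hlt⟩
    obtain ⟨u, hu⟩ : ∃ u, u ∉ Submodule.span (ZMod 2) (Set.range f) := by
      by_contra! h
      rw [(Submodule.eq_top_iff').2 h, finrank_top, Module.finrank_fin_fun] at heq
      omega
    have hdep : ¬ LinearIndependent (ZMod 2) f := by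
      intro h
      have := finrank_span_eq_card h
      rw [Fintype.card_fin] at this
      omega
    obtain ⟨v, hv⟩ : ∃ v, f v ∈ Submodule.span (ZMod 2) (f '' (Set.univ \ {v})) := by
      rw [linearIndependent_iff_notMem_span] at hdep
      push Not at hdep
      exact hdep
    have hmem : ∀ j, f j ∈ Submodule.span (ZMod 2) (Set.range f) := fun j =>
      Submodule.subset_span ⟨j, rfl⟩
    have hune : ∀ j, u ≠ f j := fun j h => hu (h ▸ hmem j)
    refine ⟨Function.update f v u, fun j => ?_, fun j k hjk => ?_, ?_⟩
    · by_cases hj : j = v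
      · subst hj
        rw [Function.update_self]
        exact fun h => hu (h ▸ Submodule.zero_mem _)
      · rw [Function.update_of_ne hj]
        exact hf j
    · by_cases hj : j = v
      · subst hj
        rw [Function.update_self, Function.update_of_ne hjk.ne']
        exact hune k
      · rw [Function.update_of_ne hj]
        by_cases hk : k = v
        · subst hk
          rw [Function.update_self]
          exact (hune j).symm
        · rw [Function.update_of_ne hk]
          exact hadj j k hjk
    · have hsub : Submodule.span (ZMod 2) (f '' (Set.univ \ {v})) ≤
          Submodule.span (ZMod 2) (Set.range (Function.update f v u)) := by
        apply Submodule.span_mono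
        rintro _ ⟨j, hj, rfl⟩
        exact ⟨j, Function.update_of_ne (by simpa using hj) _ _⟩
      have hle : Submodule.span (ZMod 2) (Set.range f) ≤
          Submodule.span (ZMod 2) (Set.range (Function.update f v u)) := by
        rw [Submodule.span_le]
        rintro _ ⟨j, rfl⟩
        by_cases hj : j = v
        · subst hj
          exact hsub hv
        · exact hsub (Submodule.subset_span ⟨j, by simpa using hj, rfl⟩)
      have hlt : Submodule.span (ZMod 2) (Set.range f) <
          Submodule.span (ZMod 2) (Set.range (Function.update f v u)) :=
        lt_of_le_of_ne hle fun h =>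
          hu (h ▸ Submodule.subset_span ⟨v, Function.update_self v u f⟩)
      have := Submodule.finrank_lt_finrank_of_lt hlt
      omega

lemma card_nonzero_vectors (q : ℕ) :
    Fintype.card {x : Fin q → ZMod 2 // x ≠ 0} = 2 ^ q - 1 := by
  rw [Fintype.card_subtype_compl, Fintype.card_fun, ZMod.card, Fintype.card_fin,
    Fintype.card_subtype_eq]

/-- Lemma 1: a `2^n` factorial in blocks of size `2^q` estimating all main effects and
all interactions of a requirements graph `G` exists (i.e. there is a rank-`q` generator
matrix with nonzero columns in which adjacent vertices receive distinct columns) iff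
`G` is `(2^q - 1)`-colorable. -/
theorem stmt7 (q n : ℕ) (hq : 1 ≤ q) (hqn : q ≤ n) (G : SimpleGraph (Fin n)) :
    (∃ X : Matrix (Fin q) (Fin n) (ZMod 2),
      X.rank = q ∧
      (∀ j : Fin n, (fun i => X i j) ≠ 0) ∧
      (∀ j k : Fin n, G.Adj j k → (fun i => X i j) ≠ (fun i => X i k))) ↔
    G.Colorable (2 ^ q - 1) := by
  constructor
  · rintro ⟨X, -, hne, hadj⟩
    rw [← card_nonzero_vectors q]
    exact (SimpleGraph.Coloring.mk
      (fun j => (⟨fun i => X i j, hne j⟩ : {x : Fin q → ZMod 2 // x ≠ 0}))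
      (fun {j k} h heq => hadj j k h (congrArg Subtype.val heq))).colorable
  · intro hG
    have c : G.Coloring {x : Fin q → ZMod 2 // x ≠ 0} :=
      hG.toColoring (card_nonzero_vectors q).ge
    obtain ⟨f, hf, hadj, hdim⟩ := exists_coloring_finrank_ge hqn G (fun j => (c j).1)
      (fun j => (c j).2) (fun j k h heq => c.valid h (Subtype.ext heq)) q le_rfl
    refine ⟨Matrix.of fun i j => f j i, le_antisymm ?_ ?_, hf, hadj⟩
    · simpa using Matrix.rank_le_height (Matrix.of fun i j => f j i)
    · rw [Matrix.rank_eq_finrank_span_cols]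
      exact hdim
end

section
/- Let 1 ≤ q ≤ n and let G be a simple graph on Fin n. Suppose at least one of the following holds: (i) every vertex of G has degree at most 2^q − 1 and G contains no clique on 2^q vertices (G.CliqueFree (2^q)); (ii) the number of vertices of G of degree at least 2^q − 1 is at most 2^q − 1. Then there exists a matrix X : Matrix (Fin q) (Fin n) (ZMod 2) of rank q such that every column of X is nonzero and for all j, k with G.Adj j k the j-th and k-th columns of X differ. (Equivalently, a 2^n factorial in blocks of size 2^q exists from which all main effects and all interactions of G are estimable.) -/
/-!
A matrix with nonzero columns that differ along the edges of `G` is a proper colouring of `G` by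
the `k = 2 ^ q - 1` nonzero vectors of `GF(2) ^ q`.

Under (ii), the vertices of degree at least `k` receive distinct colours, and the remaining ones,
of degree less than `k`, are coloured greedily.

Under (i), the colouring is Brooks' theorem (`brooks`); here `k = 1` (no edges) or `k ≥ 3`. The
proof is by strong induction on the set `S` of vertices to be coloured. One may assume that every
vertex of `S` has exactly `k` neighbours, all in `S`. As there is no `(k + 1)`-clique, some `v ∈ S`
has nonadjacent neighbours `x ≠ y`. Take a longest path in `S` starting `x, v, y, …`; all neighbours
of its end `z` lie on it, and the neighbour `w` of `z` furthest back along the path closes a cycle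
`C` from `w` to `z`.
* If `C ≠ S`, colour `S \ C` by induction. When no edge leaves `C`, colour `C` by induction too.
  Otherwise, since `z` has no neighbour outside `C`, there are consecutive `a, b` on `C` such that
  `b` has a neighbour `u` outside `C` and `a` has none. Give `a` the colour of `u` and colour
  greedily around the cycle from `a` to `b`: each vertex before `b` has an uncoloured neighbour, and
  `b` has two neighbours `a, u` of the same colour.
* If `C = S`, the path runs through all of `S`. Give `x` and `y` the same colour; `v` has a third
  neighbour `u`. Colour the path from `y` up to `u` (excluded), then from `z` back to `u`, and `v`
  last.

Finally the rank: among the valid matrices take one of maximal rank. If its rank were less than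
`q ≤ n`, some column would lie in the span of the others, and replacing it by a vector outside the
column space would keep the matrix valid and increase the rank.
-/

/-! ### Greedy extension of colourings -/

/-- `c` is a proper colouring of the subgraph of `G` induced on `S`; the values of `c` outside `S`
are irrelevant. -/
def ProperOn {V α : Type*} (G : SimpleGraph V) (c : V → α) (S : Finset V) : Prop :=
  ∀ u ∈ S, ∀ v ∈ S, G.Adj u v → c u ≠ c v

section Colouring

set_option linter.unusedSectionVars false

variable {V α : Type*} [Fintype V] [DecidableEq V] [Fintype α] [DecidableEq α]
  {G : SimpleGraph V} [DecidableRel G.Adj]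

/-- A vertex can be given any colour not used by its neighbours in `S`. -/
lemma ProperOn.update {c : V → α} {S : Finset V} (hc : ProperOn G c S) {x : V} (hx : x ∉ S)
    (a : α) (ha : ∀ u ∈ S, G.Adj x u → c u ≠ a) :
    ProperOn G (Function.update c x a) (insert x S) := by
  have hne : ∀ u ∈ S, u ≠ x := fun u hu h => hx (h ▸ hu)
  intro u hu v hv huv
  rcases Finset.mem_insert.1 hu with rfl | hu'
  · rcases Finset.mem_insert.1 hv with rfl | hv'
    · exact absurd huv (G.loopless.irrefl _)
    · rw [Function.update_self, Function.update_of_ne (hne v hv')]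
      exact (ha v hv' huv).symm
  · rcases Finset.mem_insert.1 hv with rfl | hv'
    · rw [Function.update_self, Function.update_of_ne (hne u hu')]
      exact ha u hu' huv.symm
    · rw [Function.update_of_ne (hne v hv'), Function.update_of_ne (hne u hu')]
      exact hc u hu' v hv' huv

/-- A vertex whose neighbours in `S` do not use up all colours can be coloured. -/
lemma ProperOn.extend {c : V → α} {S : Finset V} (hc : ProperOn G c S) {x : V} (hx : x ∉ S)
    (hcard : ((G.neighborFinset x ∩ S).image c).card < Fintype.card α) :
    ∃ c' : V → α, (∀ v ∈ S, c' v = c v) ∧ ProperOn G c' (insert x S) := by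
  obtain ⟨a, ha⟩ : ∃ a, a ∉ (G.neighborFinset x ∩ S).image c := by
    by_contra! h
    rw [Finset.eq_univ_of_forall h, Finset.card_univ] at hcard
    exact lt_irrefl _ hcard
  refine ⟨Function.update c x a, fun v hv => Function.update_of_ne (ne_of_mem_of_not_mem hv hx) _ _,
    hc.update hx a fun u hu hxu hcu => ha ?_⟩
  exact Finset.mem_image.2 ⟨u, by simp [hu, hxu], hcu⟩

/-- A vertex of degree at most the number of colours can be coloured if one of its neighbours is
uncoloured. -/
lemma ProperOn.extend_of_free {c : V → α} {S : Finset V} (hc : ProperOn G c S) {x y : V}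
    (hx : x ∉ S) (hdeg : G.degree x ≤ Fintype.card α) (hxy : G.Adj x y) (hy : y ∉ S) :
    ∃ c' : V → α, (∀ v ∈ S, c' v = c v) ∧ ProperOn G c' (insert x S) := by
  refine hc.extend hx (lt_of_le_of_lt Finset.card_image_le (lt_of_lt_of_le ?_ hdeg))
  rw [← G.card_neighborFinset_eq_degree]
  refine Finset.card_lt_card ⟨Finset.inter_subset_left, fun h => hy ?_⟩
  exact (Finset.mem_inter.1 (h (by simpa using hxy))).2

/-- A vertex of degree at most the number of colours can be coloured if two of its neighbours have
the same colour. -/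
lemma ProperOn.extend_of_eq {c : V → α} {S : Finset V} (hc : ProperOn G c S) {x u w : V}
    (hx : x ∉ S) (hdeg : G.degree x ≤ Fintype.card α) (hxu : G.Adj x u) (hxw : G.Adj x w)
    (hu : u ∈ S) (hw : w ∈ S) (huw : u ≠ w) (heq : c u = c w) :
    ∃ c' : V → α, (∀ v ∈ S, c' v = c v) ∧ ProperOn G c' (insert x S) := by
  refine hc.extend hx (lt_of_lt_of_le (lt_of_lt_of_le ?_ (Finset.card_le_card
    (Finset.inter_subset_left (s₂ := S)))) (G.card_neighborFinset_eq_degree x ▸ hdeg))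
  refine lt_of_le_of_ne Finset.card_image_le fun h => huw ?_
  exact Finset.card_image_iff.1 h (by simp [hxu, hu]) (by simp [hxw, hw]) heq

/-- Greedy colouring along a path `l` of uncoloured vertices leading to an uncoloured vertex `y`,
which stays uncoloured. -/
lemma ProperOn.extend_chain (hdeg : ∀ v, G.degree v ≤ Fintype.card α) (l : List V) {y : V} :
    ∀ {c : V → α} {S : Finset V}, ProperOn G c S → y ∉ S → (l ++ [y]).Nodup →
      (∀ v ∈ l, v ∉ S) → (l ++ [y]).IsChain G.Adj →
      ∃ c' : V → α, (∀ v ∈ S, c' v = c v) ∧ ProperOn G c' (S ∪ l.toFinset) := by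
  induction l with
  | nil => intro c S hc _ _ _ _; exact ⟨c, fun _ _ => rfl, by simpa using hc⟩
  | cons x l ih =>
    intro c S hc hy hnd hdisj hch
    have hnd' : x ∉ l ++ [y] ∧ (l ++ [y]).Nodup := by simpa using hnd
    obtain ⟨x', hadj, hx'⟩ : ∃ x', G.Adj x x' ∧ x' ∉ S := by
      cases l with
      | nil => exact ⟨y, by simpa using hch, hy⟩
      | cons x' l => exact ⟨x', (List.isChain_cons_cons.1 hch).1, hdisj x' (by simp)⟩
    obtain ⟨c₁, h₁, hc₁⟩ := hc.extend_of_free (hdisj x (by simp)) (hdeg x) hadj hx'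
    obtain ⟨c₂, h₂, hc₂⟩ := ih hc₁ (by
        rw [Finset.mem_insert]; rintro (rfl | h)
        · exact hnd'.1 (by simp)
        · exact hy h) hnd'.2 (by
        intro v hv; rw [Finset.mem_insert]; rintro (rfl | h)
        · exact hnd'.1 (by simp [hv])
        · exact hdisj v (by simp [hv]) h) (List.IsChain.tail hch)
    refine ⟨c₂, fun v hv => (h₂ v (by simp [hv])).trans (h₁ v hv), ?_⟩
    have : S ∪ (x :: l).toFinset = insert x S ∪ l.toFinset := by ext; simp
    rwa [this]

/-! ### Paths and cycles -/

/-- If the head of a list fails `P` and a later element satisfies it, then somewhere an element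
failing `P` is directly followed by one satisfying it. -/
lemma exists_consecutive {P : V → Prop} (l : List V) :
    ∀ z : V, ¬ P z → (∃ b ∈ l, P b) →
      ∃ D a b E, z :: l = D ++ a :: b :: E ∧ ¬ P a ∧ P b := by
  induction l with
  | nil => rintro z _ ⟨b, hb, _⟩; simp at hb
  | cons t l ih =>
    rintro z hz ⟨b, hb, hPb⟩
    by_cases ht : P t
    · exact ⟨[], z, t, l, rfl, hz, ht⟩
    · have hbl : b ∈ l := by
        rcases List.mem_cons.1 hb with rfl | h
        · exact absurd hPb ht
        · exact h
      obtain ⟨D, a, b, E, h, h'⟩ := ih t ht ⟨b, hbl, hPb⟩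
      exact ⟨z :: D, a, b, E, by rw [h]; rfl, h'⟩

/-- A list can be cut after the last of its elements satisfying `P`. -/
lemma exists_last {P : V → Prop} (l : List V) (h : ∃ b ∈ l, P b) :
    ∃ A w B, l = A ++ w :: B ∧ P w ∧ ∀ b ∈ B, ¬ P b := by
  induction l with
  | nil => obtain ⟨b, hb, _⟩ := h; simp at hb
  | cons t l ih =>
    by_cases hl : ∃ b ∈ l, P b
    · obtain ⟨A, w, B, h, h'⟩ := ih hl
      exact ⟨t :: A, w, B, by rw [h]; rfl, h'⟩
    · push Not at hl
      obtain ⟨b, hb, hPb⟩ := h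
      rcases List.mem_cons.1 hb with rfl | hb
      · exact ⟨[], b, l, rfl, hPb, hl⟩
      · exact absurd hPb (hl b hb)

/-- A path ending (at the tail of the list) in `y, v, x` that cannot be prolonged beyond its head
`z` within `S`. -/
lemma exists_maximal_path {S : Finset V} {x v y : V} (hx : x ∈ S) (hv : v ∈ S) (hy : y ∈ S)
    (hvx : G.Adj v x) (hvy : G.Adj v y) (hxy : x ≠ y) :
    ∃ (T : List V) (z : V) (p : List V), T ++ [y, v, x] = z :: p ∧ (z :: p).Nodup ∧
      (z :: p).IsChain G.Adj ∧ (∀ u ∈ z :: p, u ∈ S) ∧ ∀ u ∈ S, G.Adj z u → u ∈ p := by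
  let Q : ℕ → Prop := fun m => ∃ T : List V, T.length = m ∧ (T ++ [y, v, x]).Nodup ∧
      (T ++ [y, v, x]).IsChain G.Adj ∧ ∀ u ∈ T ++ [y, v, x], u ∈ S
  have h0 : Q 0 := ⟨[], rfl, by simp [hvx.ne, hvy.ne.symm, hxy.symm], by
    simp [hvy.symm, hvx], by simp [hx, hy, hv]⟩
  have hb : ∀ m, Q m → m ≤ S.card := by
    rintro m ⟨T, rfl, hnd, -, hS⟩
    have h1 : (T ++ [y, v, x]).toFinset ⊆ S := fun u hu => hS u (List.mem_toFinset.1 hu)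
    have h2 := Finset.card_le_card h1
    rw [List.toFinset_card_of_nodup hnd] at h2
    simp at h2; omega
  classical
  obtain ⟨T, hTl, hnd, hch, hS⟩ := Nat.findGreatest_spec (P := Q) (Nat.zero_le S.card) h0
  obtain ⟨z, p, hzp⟩ : ∃ z p, T ++ [y, v, x] = z :: p := by
    cases T with
    | nil => exact ⟨_, _, rfl⟩
    | cons t T => exact ⟨_, _, rfl⟩
  refine ⟨T, z, p, hzp, hzp ▸ hnd, hzp ▸ hch, hzp ▸ hS, fun u hu hzu => ?_⟩
  by_contra hup
  have hQ : Q (T.length + 1) := by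
    refine ⟨u :: T, rfl, ?_, ?_, ?_⟩
    · rw [List.cons_append, List.nodup_cons]
      refine ⟨?_, hnd⟩
      rw [hzp, List.mem_cons]
      rintro (rfl | h)
      · exact G.loopless.irrefl _ hzu
      · exact hup h
    · rw [List.cons_append, hzp, List.isChain_cons_cons]
      exact ⟨hzu.symm, hzp ▸ hch⟩
    · intro t ht
      rw [List.cons_append, List.mem_cons] at ht
      rcases ht with rfl | ht
      · exact hu
      · exact hS t ht
  have := Nat.le_findGreatest (hb _ hQ) hQ
  omega

/-- Colouring of a set all of whose vertices lie on a path ending in `y, v, x`, where the neighbours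
`x, y` of `v` are nonadjacent and `v` has a further neighbour `u`. -/
lemma properOn_of_spanning_path [Nonempty α] (hdeg : ∀ v, G.degree v ≤ Fintype.card α)
    {S : Finset V} {x v y u : V} {T : List V} (hnd : (T ++ [y, v, x]).Nodup)
    (hch : (T ++ [y, v, x]).IsChain G.Adj) (hS : ∀ t ∈ S, t ∈ T ++ [y, v, x])
    (hvx : G.Adj v x) (hvy : G.Adj v y) (hxy : ¬ G.Adj x y) (hvu : G.Adj v u) (hu : u ∈ T) :
    ∃ c : V → α, ProperOn G c S := by
  obtain ⟨T₁, T₂, rfl⟩ := List.append_of_mem hu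
  obtain ⟨a⟩ := ‹Nonempty α›
  have h0 : ProperOn G (fun _ => a) {x, y} := by
    intro s hs t ht hst
    simp only [Finset.mem_insert, Finset.mem_singleton] at hs ht
    rcases hs with rfl | rfl <;> rcases ht with rfl | rfl
    · exact absurd hst (G.loopless.irrefl _)
    · exact absurd hst hxy
    · exact absurd hst.symm hxy
    · exact absurd hst (G.loopless.irrefl _)
  have hnd2 := hnd
  simp only [List.append_assoc, List.cons_append, List.nodup_append, List.nodup_cons,
    List.mem_append, List.mem_cons] at hnd2
  have hch1 : (T₂.reverse ++ [u]).IsChain G.Adj := by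
    have h1 : (u :: T₂).IsChain G.Adj := hch.infix ⟨T₁, [y, v, x], by simp⟩
    rw [← List.reverse_cons, List.isChain_reverse]
    exact h1.imp fun _ _ h => h.symm
  have hch2 : ((T₁ ++ [u]) ++ [v]).IsChain G.Adj := by
    have h1 : (T₁ ++ [u]).IsChain G.Adj := hch.infix ⟨[], T₂ ++ [y, v, x], by simp⟩
    rw [List.isChain_append]
    exact ⟨h1, by simp, by simp [hvu.symm]⟩
  obtain ⟨c₁, h₁, hc₁⟩ := h0.extend_chain hdeg T₂.reverse (y := u) (by grind)
    (by rw [← List.reverse_cons, List.nodup_reverse, List.nodup_cons]; grind)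
    (by simp only [List.mem_reverse]; grind) hch1
  obtain ⟨c₂, h₂, hc₂⟩ := hc₁.extend_chain hdeg (T₁ ++ [u]) (y := v) (by simp; grind)
    (by simp [List.nodup_append]; grind) (by simp; grind) hch2
  obtain ⟨c₃, -, hc₃⟩ := hc₂.extend_of_eq (x := v) (u := x) (w := y) (by simp; grind) (hdeg v)
    hvx hvy (by simp) (by simp) (by grind)
    (by rw [h₂ x (by simp), h₂ y (by simp), h₁ x (by simp), h₁ y (by simp)])
  refine ⟨c₃, fun s hs t ht => hc₃ s ?_ t ?_⟩
  · have := hS s hs; simp at this ⊢; tauto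
  · have := hS t ht; simp at this ⊢; tauto

/-- Extension of a colouring of `R` to a cycle `z :: l` disjoint from `R` that has a vertex with a
neighbour in `R`, while its vertex `z` has none. -/
lemma ProperOn.extend_cycle (hdeg : ∀ v, G.degree v ≤ Fintype.card α)
    {R : Finset V} {c : V → α} (hc : ProperOn G c R) {z : V} {l : List V}
    (hnd : (z :: l).Nodup) (hch : (z :: l).IsChain G.Adj)
    (hcyc : ∀ w ∈ (z :: l).getLast?, G.Adj w z)
    (hR : ∀ v ∈ z :: l, v ∉ R) (hz : ∀ u ∈ R, ¬ G.Adj z u)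
    (hout : ∃ b ∈ l, ∃ u ∈ R, G.Adj b u) :
    ∃ c' : V → α, ProperOn G c' (R ∪ (z :: l).toFinset) := by
  obtain ⟨D, a, b, E, hl, ha, u, huR, hbu⟩ :=
    exists_consecutive (P := fun b => ∃ u ∈ R, G.Adj b u) l z (by simpa using hz) hout
  push Not at ha
  have hDz : ∀ d ∈ D.head?, d = z := by
    cases D with
    | nil => simp
    | cons d D => simp at hl; simp [hl.1]
  rw [hl] at hnd hch hcyc hR ⊢
  have haR : a ∉ R := hR a (by simp)
  have hnd2 := hnd
  simp only [List.nodup_append, List.nodup_cons, List.mem_cons] at hnd2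
  have h1 := hc.update haR (c u) fun t ht hat => absurd hat (ha t ht)
  have hchD : D.IsChain G.Adj := hch.infix ⟨[], a :: b :: E, by simp⟩
  have hchE : (b :: E).IsChain G.Adj := hch.infix ⟨D ++ [a], [], by simp⟩
  have hba : G.Adj b a := by
    have : [a, b].IsChain G.Adj := hch.infix ⟨D, E, by simp⟩
    simp at this; exact this.symm
  have hch1 : ((D.reverse ++ E.reverse) ++ [b]).IsChain G.Adj := by
    have h2 : ((b :: E) ++ D).IsChain G.Adj := by
      rw [List.isChain_append]
      refine ⟨hchE, hchD, fun s hs t ht => ?_⟩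
      rw [hDz t ht]
      exact hcyc s (by simpa [List.getLast?_append, List.getLast?_cons_cons] using hs)
    have h3 : ((b :: E) ++ D).reverse = (D.reverse ++ E.reverse) ++ [b] := by simp
    rw [← h3, List.isChain_reverse]
    exact h2.imp fun _ _ h => h.symm
  have hbR : b ∉ R := hR b (by simp)
  have hua : u ≠ a := fun h => haR (h ▸ huR)
  obtain ⟨c₁, h₁, hc₁⟩ := h1.extend_chain hdeg (D.reverse ++ E.reverse) (y := b)
    (by simp; grind) (by simp [List.nodup_append]; grind)
    (by simp; grind) hch1
  obtain ⟨c₂, -, hc₂⟩ := hc₁.extend_of_eq (x := b) (u := u) (w := a) (by simp; grind) (hdeg b)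
    hbu hba (by simp [huR]) (by simp) hua
    (by rw [h₁ u (by simp [huR]), h₁ a (by simp), Function.update_self,
          Function.update_of_ne hua])
  refine ⟨c₂, fun s hs t ht => hc₂ s ?_ t ?_⟩
  · simp at hs ⊢; tauto
  · simp at ht ⊢; tauto

/-! ### Brooks' theorem and the case of few vertices of large degree -/

/-- Brooks' theorem for at least three colours, on every set of vertices. -/
theorem brooks (hα : 3 ≤ Fintype.card α) (hdeg : ∀ v, G.degree v ≤ Fintype.card α)
    (hcl : G.CliqueFree (Fintype.card α + 1)) (S : Finset V) :
    ∃ c : V → α, ProperOn G c S := by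
  have : Nonempty α := Fintype.card_pos_iff.1 (by omega)
  induction S using Finset.strongInduction with
  | H S ih =>
  by_cases hlow : ∃ v ∈ S, (G.neighborFinset v ∩ S).card < Fintype.card α
  · obtain ⟨v, hv, hlt⟩ := hlow
    obtain ⟨c, hc⟩ := ih _ (Finset.erase_ssubset hv)
    obtain ⟨c', -, hc'⟩ := hc.extend (Finset.notMem_erase v S)
      (lt_of_le_of_lt Finset.card_image_le (lt_of_le_of_lt (Finset.card_le_card
        (Finset.inter_subset_inter_left (Finset.erase_subset v S))) hlt))
    rw [Finset.insert_erase hv] at hc'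
    exact ⟨c', hc'⟩
  push Not at hlow
  have hreg : ∀ v ∈ S, (G.neighborFinset v).card = Fintype.card α ∧ ∀ u, G.Adj v u → u ∈ S := by
    intro v hv
    have h1 := hlow v hv
    have h2 := hdeg v
    rw [← G.card_neighborFinset_eq_degree] at h2
    have h3 := Finset.card_le_card (Finset.inter_subset_left (s₁ := G.neighborFinset v) (s₂ := S))
    have h4 := Finset.eq_of_subset_of_card_le
      (Finset.inter_subset_left (s₁ := G.neighborFinset v) (s₂ := S)) (h2.trans h1)
    refine ⟨by omega, fun u hu => ?_⟩
    have : u ∈ G.neighborFinset v ∩ S := by rw [h4]; simpa using hu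
    exact (Finset.mem_inter.1 this).2
  rcases S.eq_empty_or_nonempty with rfl | ⟨v, hv⟩
  · exact ⟨fun _ => Classical.arbitrary α, fun u hu => by simp at hu⟩
  obtain ⟨x, y, hvx, hvy, hne, hxy⟩ :
      ∃ x y, G.Adj v x ∧ G.Adj v y ∧ x ≠ y ∧ ¬ G.Adj x y := by
    by_contra! hcon
    refine hcl (insert v (G.neighborFinset v)) ⟨?_, ?_⟩
    · intro s hs t ht hst
      simp only [Finset.coe_insert, SimpleGraph.coe_neighborFinset, Set.mem_insert_iff,
        SimpleGraph.mem_neighborSet] at hs ht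
      rcases hs with rfl | hs <;> rcases ht with rfl | ht
      · exact absurd rfl hst
      · exact ht
      · exact hs.symm
      · exact hcon s t hs ht hst
    · rw [Finset.card_insert_of_notMem (by simp), (hreg v hv).1]
  obtain ⟨T, z, p, hp, hnd, hch, hpS, hz⟩ := exists_maximal_path ((hreg v hv).2 x hvx) hv
    ((hreg v hv).2 y hvy) hvx hvy hne
  have hzS : z ∈ S := hpS z (by simp)
  have hzp : ∃ b ∈ p, G.Adj z b := by
    obtain ⟨b, hb⟩ := Finset.card_pos.1 (show 0 < (G.neighborFinset z).card by
      have := (hreg z hzS).1; omega)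
    have hzb : G.Adj z b := by simpa using hb
    exact ⟨b, hz b ((hreg z hzS).2 b hzb) hzb, hzb⟩
  obtain ⟨A, w, B, rfl, hzw, hB⟩ := exists_last p hzp
  have hzC : ∀ u, G.Adj z u → u ∈ z :: (A ++ [w]) := by
    intro u hu
    have h1 := hz u ((hreg z hzS).2 u hu) hu
    have h2 : u ∉ B := fun h => hB u h hu
    simp at h1 ⊢; tauto
  have hpre : z :: (A ++ w :: B) = (z :: (A ++ [w])) ++ B := by simp
  have hCnd : (z :: (A ++ [w])).Nodup := by rw [hpre] at hnd; exact hnd.of_append_left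
  have hCS : ∀ u ∈ z :: (A ++ [w]), u ∈ S := fun u hu => hpS u (by
    rw [hpre]; exact List.mem_append_left _ hu)
  by_cases hspan : ∀ u ∈ S, u ∈ z :: (A ++ [w])
  -- If the cycle contains all of `S`, so does the path.
  · obtain ⟨u, hu, hux⟩ : ∃ u ∈ G.neighborFinset v, u ∉ ({x, y} : Finset V) := by
      apply Finset.exists_mem_notMem_of_card_lt_card
      have := Finset.card_le_two (a := x) (b := y)
      have := (hreg v hv).1
      omega
    have hvu : G.Adj v u := by simpa using hu
    have hall : ∀ t ∈ S, t ∈ T ++ [y, v, x] := fun t ht => by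
      rw [hp, hpre]; exact List.mem_append_left _ (hspan t ht)
    refine properOn_of_spanning_path hdeg (hp ▸ hnd) (hp ▸ hch) hall hvx hvy hxy hvu ?_
    have h1 := hall u ((hreg v hv).2 u hvu)
    have h2 := hvu.ne
    simp at h1 hux
    grind
  · push Not at hspan
    obtain ⟨s, hsS, hsC⟩ := hspan
    set C : List V := z :: (A ++ [w]) with hC
    have hCsub : C.toFinset ⊆ S := fun u hu => hCS u (List.mem_toFinset.1 hu)
    have hunion : (S \ C.toFinset) ∪ C.toFinset = S := Finset.sdiff_union_of_subset hCsub
    obtain ⟨c, hc⟩ := ih (S \ C.toFinset) (Finset.sdiff_ssubset hCsub ⟨z, by simp [hC]⟩)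
    have hzout : ∀ u ∈ S \ C.toFinset, ¬ G.Adj z u := fun u hu hzu => by
      simp only [Finset.mem_sdiff, List.mem_toFinset] at hu
      exact hu.2 (hzC u hzu)
    by_cases hout : ∃ b ∈ A ++ [w], ∃ u ∈ S \ C.toFinset, G.Adj b u
    · obtain ⟨c', hc'⟩ := hc.extend_cycle hdeg hCnd (hch.infix ⟨[], B, by simp⟩)
        (by
          intro t ht
          have hw : w = t := by
            rw [← List.cons_append, List.getLast?_concat] at ht; simpa using ht
          exact hw ▸ hzw.symm)
        (fun t ht h => (Finset.mem_sdiff.1 h).2 (List.mem_toFinset.2 ht)) hzout hout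
      rw [← hC, hunion] at hc'
      exact ⟨c', hc'⟩
    -- No edge joins the cycle to its complement: colour both parts independently.
    · push Not at hout
      obtain ⟨d, hd⟩ := ih C.toFinset
        ⟨hCsub, fun h => hsC (List.mem_toFinset.1 (h hsS))⟩
      have hsep : ∀ a ∈ C, ∀ b ∈ S, b ∉ C → ¬ G.Adj a b := by
        intro a ha b hb hbC
        have hb' : b ∈ S \ C.toFinset := by simp [hb, hbC]
        rcases List.mem_cons.1 ha with rfl | ha
        · exact hzout b hb'
        · exact hout a ha b hb'
      refine ⟨fun t => if t ∈ C then d t else c t, fun a ha b hb hab => ?_⟩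
      by_cases haC : a ∈ C <;> by_cases hbC : b ∈ C
      · simp only [haC, hbC, if_true]
        exact hd a (by simpa using haC) b (by simpa using hbC) hab
      · exact absurd hab (hsep a haC b hb hbC)
      · exact absurd hab.symm (hsep b hbC a ha haC)
      · simp only [haC, hbC, if_false]
        exact hc a (by simp [ha, haC]) b (by simp [hb, hbC]) hab

/-- If at most as many vertices as there are colours have degree at least the number of colours,
then the graph can be coloured. -/
lemma properOn_of_few_large_degrees [Nonempty α]
    (h : (Finset.univ.filter fun v => Fintype.card α ≤ G.degree v).card ≤ Fintype.card α)
    (S : Finset V) :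
    ∃ c : V → α, ProperOn G c ((Finset.univ.filter fun v => Fintype.card α ≤ G.degree v) ∪ S) := by
  induction S using Finset.induction_on with
  | empty =>
    set H := Finset.univ.filter fun v => Fintype.card α ≤ G.degree v
    obtain ⟨f⟩ : Nonempty (H ↪ α) := Function.Embedding.nonempty_of_card_le (by simpa using h)
    refine ⟨fun v => if hv : v ∈ H then f ⟨v, hv⟩ else Classical.arbitrary α, ?_⟩
    intro u hu v hv huv
    rw [Finset.union_empty] at hu hv
    simp only [hu, hv, dif_pos]
    exact fun h => huv.ne (congrArg Subtype.val (f.injective h))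
  | insert x S _ ih =>
    obtain ⟨c, hc⟩ := ih
    rw [Finset.union_insert]
    by_cases hx : x ∈ (Finset.univ.filter fun v => Fintype.card α ≤ G.degree v) ∪ S
    · rw [Finset.insert_eq_of_mem hx]; exact ⟨c, hc⟩
    · have hlt : G.degree x < Fintype.card α := by
        simp at hx; exact hx.1
      obtain ⟨c', -, hc'⟩ := hc.extend hx (lt_of_le_of_lt Finset.card_image_le
        (lt_of_le_of_lt (Finset.card_le_card Finset.inter_subset_left)
          (G.card_neighborFinset_eq_degree x ▸ hlt)))
      exact ⟨c', hc'⟩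

end Colouring

/-! ### Full rank -/

/-- A column lying in the span of the others (one exists when the rank is below `q ≤ n`) can be
replaced by a vector outside the column space, which increases the rank. -/
lemma exists_rank_lt_of_rank_lt {q n : ℕ} (hqn : q ≤ n) (X : Matrix (Fin q) (Fin n) (ZMod 2))
    (hX : X.rank < q) :
    ∃ (j : Fin n) (v : Fin q → ZMod 2), v ∉ Submodule.span (ZMod 2) (Set.range X.col) ∧
      X.rank < (X.updateCol j v).rank := by
  have hdep : ¬ LinearIndependent (ZMod 2) X.col := by
    intro hli
    have h1 := finrank_span_eq_card hli
    rw [← Matrix.rank_eq_finrank_span_cols, Fintype.card_fin] at h1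
    omega
  rw [linearIndependent_iff_notMem_span] at hdep
  push Not at hdep
  obtain ⟨j, hj⟩ := hdep
  obtain ⟨v, hv⟩ : ∃ v, v ∉ Submodule.span (ZMod 2) (Set.range X.col) := by
    by_contra! hall
    have htop := (Submodule.eq_top_iff').2 hall
    rw [Matrix.rank_eq_finrank_span_cols, htop, finrank_top, Module.finrank_fin_fun] at hX
    exact lt_irrefl _ hX
  refine ⟨j, v, hv, ?_⟩
  rw [Matrix.rank_eq_finrank_span_cols, Matrix.rank_eq_finrank_span_cols]
  have hcolj : (X.updateCol j v).col j = v := by ext i; simp [Matrix.col]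
  have hcol : ∀ k, k ≠ j → (X.updateCol j v).col k = X.col k := by
    intro k hk; ext i; simp [Matrix.col, hk]
  refine Submodule.finrank_lt_finrank_of_lt (lt_of_le_of_ne ?_ fun h => hv ?_)
  · have hother : Submodule.span (ZMod 2) (X.col '' (Set.univ \ {j})) ≤
        Submodule.span (ZMod 2) (Set.range (X.updateCol j v).col) := by
      refine Submodule.span_mono ?_
      rintro _ ⟨k, hk, rfl⟩
      exact ⟨k, hcol k (by simpa using hk)⟩
    rw [Submodule.span_le]
    rintro _ ⟨k, rfl⟩
    by_cases hk : k = j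
    · rw [hk]; exact hother hj
    · exact hother (Submodule.subset_span ⟨k, by simpa using hk, rfl⟩)
  · rw [h]; exact Submodule.subset_span ⟨j, hcolj⟩

/-- Theorem 3: if the requirements graph `G` either (i) has maximum degree at most
`2^q - 1` and no clique on `2^q` vertices, or (ii) has at most `2^q - 1` vertices of
degree at least `2^q - 1`, then a `2^n` factorial in blocks of size `2^q` exists from
which all main effects and all interactions of `G` are estimable. -/
theorem stmt8 (q n : ℕ) (hq : 1 ≤ q) (hqn : q ≤ n)
    (G : SimpleGraph (Fin n)) [DecidableRel G.Adj]
    (h : ((∀ v : Fin n, G.degree v ≤ 2 ^ q - 1) ∧ G.CliqueFree (2 ^ q)) ∨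
      (Finset.univ.filter (fun v : Fin n => 2 ^ q - 1 ≤ G.degree v)).card ≤ 2 ^ q - 1) :
    ∃ X : Matrix (Fin q) (Fin n) (ZMod 2),
      X.rank = q ∧
      (∀ j : Fin n, (fun i => X i j) ≠ 0) ∧
      (∀ j k : Fin n, G.Adj j k → (fun i => X i j) ≠ (fun i => X i k)) := by
  let α := {v : Fin q → ZMod 2 // v ≠ 0}
  have hα : Fintype.card α = 2 ^ q - 1 := by
    simp [α, Fintype.card_subtype_compl, ZMod.card]
  have h2q : 2 ≤ 2 ^ q := by simpa using Nat.pow_le_pow_right (n := 2) (by norm_num) hq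
  have : Nonempty α := Fintype.card_pos_iff.1 (by omega)
  obtain ⟨c, hc⟩ : ∃ c : Fin n → α, ProperOn G c Finset.univ := by
    rcases h with ⟨hdeg, hcl⟩ | hfew
    · rcases Nat.eq_or_lt_of_le hq with rfl | hq2
      · rw [pow_one, SimpleGraph.cliqueFree_two] at hcl
        exact ⟨fun _ => Classical.arbitrary α, fun u _ v _ huv => by simp [hcl] at huv⟩
      · have h4 : 2 ^ 2 ≤ 2 ^ q := Nat.pow_le_pow_right (by norm_num) hq2
        refine brooks (by omega) (fun v => hα ▸ hdeg v) ?_ _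
        rwa [hα, Nat.sub_add_cancel (by omega)]
    · rw [← hα] at hfew
      obtain ⟨c, hc⟩ := properOn_of_few_large_degrees hfew Finset.univ
      exact ⟨c, by rwa [Finset.union_eq_right.2 (Finset.subset_univ _)] at hc⟩
  let Valid : Matrix (Fin q) (Fin n) (ZMod 2) → Prop := fun X =>
    (∀ j, X.col j ≠ 0) ∧ ∀ j k, G.Adj j k → X.col j ≠ X.col k
  have hne : {X | Valid X}.Nonempty :=
    ⟨fun i j => (c j).1 i, fun j => (c j).2, fun j k hjk heq =>
      hc j (Finset.mem_univ j) k (Finset.mem_univ k) hjk (Subtype.ext heq)⟩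
  obtain ⟨X, ⟨hX0, hXadj⟩, hmax⟩ :=
    Set.exists_max_image {X | Valid X} Matrix.rank (Set.toFinite _) hne
  refine ⟨X, ?_, hX0, hXadj⟩
  by_contra hrank
  have hle : X.rank ≤ q := by simpa using X.rank_le_height
  obtain ⟨j, v, hv, hlt⟩ := exists_rank_lt_of_rank_lt hqn X (lt_of_le_of_ne hle hrank)
  have hcolj : (X.updateCol j v).col j = v := by ext i; simp [Matrix.col]
  have hcol : ∀ k, k ≠ j → (X.updateCol j v).col k = X.col k := by
    intro k hk; ext i; simp [Matrix.col, hk]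
  have hvX : ∀ k, X.col k ≠ v := fun k hk => hv (hk ▸ Submodule.subset_span ⟨k, rfl⟩)
  refine absurd (hmax (X.updateCol j v) ⟨fun k => ?_, fun k l hkl => ?_⟩) (not_le.2 hlt)
  · by_cases hk : k = j
    · rw [hk, hcolj]; rintro rfl; exact hv (Submodule.zero_mem _)
    · rw [hcol k hk]; exact hX0 k
  · by_cases hk : k = j
    · rw [hk, hcolj, hcol l (fun hl => hkl.ne (hk.trans hl.symm))]
      exact (hvX l).symm
    · rw [hcol k hk]
      by_cases hl : l = j
      · rw [hl, hcolj]; exact hvX k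
      · rw [hcol l hl]; exact hXadj k l hkl
end

section
/- (Bollobás–Guy) Let n ≥ 2 and let G be an acyclic simple graph on Fin n whose maximum vertex degree d satisfies 3·d ≤ n + 8 or 3·d = n + 10. Then there exists a matrix X : Matrix (Fin 2) (Fin n) (ZMod 2) of rank 2 such that every column of X is nonzero, for all j, k with G.Adj j k the j-th and k-th columns of X differ, and the number of unordered pairs {j, k} of distinct indices with differing columns equals φ_max = C(n, 2) − v·w − 3·C(v, 2) where v = n / 3 (integer division), w = n % 3 and C(a, 2) = a(a−1)/2. (Equivalently, G admits an equitable proper 3-coloring, i.e., a proper 3-coloring whose color class sizes pairwise differ by at most one, yielding a 2^n factorial in blocks of size four that provides all required estimates and achieves the bound φ_max.) -/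
/-!
Choosing the three nonzero vectors of `GF(2)²` as colors, the required matrix is an equitable
proper 3-coloring of `G`: the number of pairs of distinct columns is `C(n,2)` minus the number of
monochromatic pairs, which depends only on the class sizes (`card_pairs_of_equitable`).

Write `k = n / 3` and `r = n % 3`. The degree hypothesis says exactly that every degree is at most
`k + r + 2`. A forest is bipartite and has fewer than `n` edges; take a bipartition `(A, B)` with
`|B| ≤ |A|` and `|B|` as large as possible. In every case below two of the classes are `B₁ ∪ X` and
`B₂ ∪ Y`, where `B = B₁ ∪ B₂`, and `X, Y ⊆ A` are disjoint, with no edge between `X` and `B₁` nor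
between `Y` and `B₂`; once these sets are large enough they can be trimmed to the exact sizes, and
the rest is a subset of `A`, hence independent (`equitable_of_split`).

* If `|B| ≥ k` (`equitable_of_balanced`), let `B₂` consist of the `|B| - k` vertices of `B` of
  smallest degree. By averaging their degrees add up to less than `k + r`, so more than `k` vertices
  are left in `B₂ ∪ (A \ N(B₂))`, while `B₁` has exactly `k` elements.
* If `|B| < k` (`equitable_of_unbalanced`), then `A` has no isolated vertices by maximality of `|B|`,
  and by counting edges fewer than `|B|` vertices of `A` are not leaves. Let `ℓ(S)` be the number of
  leaves in `A` attached to `S ⊆ B`. Taking for `X` and `Y` the leaves at `B₂` and `B₁`, it suffices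
  that `ℓ(B₁) - |B₁|` lies in `[p, q]` with `p = k - |B|` and `q = ℓ(B) - k ≥ 2p`. If no single
  `ℓ(b) - 1` exceeds `q`, such a `B₁` exists: a singleton, or else all weights `ℓ(b) - 1` are below
  `p` and adding them one at a time cannot jump over `[p, 2p - 2]`. If `ℓ(b) - 1 > q` for some `b`,
  then `B₁ = {b}`, `X = A \ N(b)` and `Y` the set of leaves at `b` work; this is where the bound on
  the degree of `b` is needed.
-/

open Finset

/-- `G` has a proper 3-coloring all of whose classes have `⌊|V|/3⌋` or `⌊|V|/3⌋ + 1` elements. -/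
def HasEquitableThreeColoring {V : Type*} [Fintype V] (G : SimpleGraph V) : Prop :=
  ∃ c : V → Fin 3, (∀ u v, G.Adj u v → c u ≠ c v) ∧
    ∀ i, Fintype.card V / 3 ≤ #{v | c v = i} ∧ #{v | c v = i} ≤ Fintype.card V / 3 + 1

/-! ### From equitable colorings to matrices -/

/-- The three nonzero vectors of `GF(2)²`. -/
def nonzeroVec (i : Fin 3) : Fin 2 → ZMod 2 :=
  ![![1, 0], ![0, 1], ![1, 1]] i

lemma nonzeroVec_ne_zero (i : Fin 3) : nonzeroVec i ≠ 0 := by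
  revert i; decide

lemma nonzeroVec_injective : Function.Injective nonzeroVec := by
  intro i j; revert i j; decide

/-- Two distinct nonzero vectors over `GF(2)` are linearly independent. -/
lemma det_nonzeroVec (i j : Fin 3) (h : i ≠ j) :
    nonzeroVec i 0 * nonzeroVec j 1 - nonzeroVec j 0 * nonzeroVec i 1 ≠ 0 := by
  revert i j; decide

lemma two_mul_card_lt_and {n : ℕ} (c : Fin n → Fin 3) :
    2 * #{p : Fin n × Fin n | p.1 < p.2 ∧ c p.1 ≠ c p.2} =
      #{p : Fin n × Fin n | c p.1 ≠ c p.2} := by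
  have h1 : #{p : Fin n × Fin n | p.1 < p.2 ∧ c p.1 ≠ c p.2} =
      #{p : Fin n × Fin n | p.2 < p.1 ∧ c p.1 ≠ c p.2} := by
    refine Finset.card_bij (fun p _ => p.swap) ?_ ?_ ?_
    · rintro ⟨a, b⟩ h
      simp only [mem_filter, mem_univ, true_and, Prod.swap] at h ⊢
      exact ⟨h.1, h.2.symm⟩
    · rintro ⟨a, b⟩ _ ⟨a', b'⟩ _ h
      simpa [and_comm] using h
    · rintro ⟨a, b⟩ h
      simp only [mem_filter, mem_univ, true_and] at h
      exact ⟨(b, a), by simpa using ⟨h.1, h.2.symm⟩, rfl⟩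
  have h2 : ({p : Fin n × Fin n | c p.1 ≠ c p.2} : Finset _) =
      ({p : Fin n × Fin n | p.1 < p.2 ∧ c p.1 ≠ c p.2} : Finset _) ∪
      ({p : Fin n × Fin n | p.2 < p.1 ∧ c p.1 ≠ c p.2} : Finset _) := by
    ext ⟨a, b⟩
    simp only [mem_filter, mem_univ, true_and, mem_union]
    constructor
    · intro h
      rcases lt_trichotomy a b with hab | hab | hab
      · exact Or.inl ⟨hab, h⟩
      · exact absurd (congrArg c hab) h
      · exact Or.inr ⟨hab, h⟩
    · rintro (h | h) <;> exact h.2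
  rw [h2, card_union_of_disjoint, ← h1, two_mul]
  rw [Finset.disjoint_left]
  rintro ⟨a, b⟩ h h'
  simp only [mem_filter, mem_univ, true_and] at h h'
  exact absurd h.1 (not_lt.2 h'.1.le)

lemma card_ne_add_sum_sq {n : ℕ} (c : Fin n → Fin 3) :
    #{p : Fin n × Fin n | c p.1 ≠ c p.2} + ∑ i, #{v | c v = i} * #{v | c v = i} = n * n := by
  have h1 : #{p : Fin n × Fin n | c p.1 = c p.2} = ∑ i, #{v | c v = i} * #{v | c v = i} := by
    rw [Finset.card_eq_sum_card_fiberwise (f := fun p : Fin n × Fin n => c p.1)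
      (t := (univ : Finset (Fin 3))) (fun _ _ => by simp)]
    refine Finset.sum_congr rfl fun i _ => ?_
    rw [← card_product]
    congr 1
    ext ⟨a, b⟩
    simp only [mem_filter, mem_univ, true_and, mem_product]
    constructor
    · rintro ⟨h, h'⟩; exact ⟨h', h ▸ h'⟩
    · rintro ⟨h, h'⟩; exact ⟨h.trans h'.symm, h⟩
  have h2 := Finset.card_filter_add_card_filter_not
    (s := (univ : Finset (Fin n × Fin n))) (fun p => c p.1 = c p.2)
  simp only [card_univ, Fintype.card_prod, Fintype.card_fin] at h2
  rw [← h1, add_comm]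
  exact h2

lemma two_mul_choose_two_add (m : ℕ) : 2 * m.choose 2 + m = m * m := by
  induction m with
  | zero => rfl
  | succ m ih =>
    rw [Nat.choose_succ_succ' m 1, Nat.choose_one_right]
    nlinarith

lemma card_pairs_of_equitable {n : ℕ} (c : Fin n → Fin 3)
    (hc : ∀ i, n / 3 ≤ #{v | c v = i} ∧ #{v | c v = i} ≤ n / 3 + 1) :
    #{p : Fin n × Fin n | p.1 < p.2 ∧ c p.1 ≠ c p.2} =
      Nat.choose n 2 - (n / 3) * (n % 3) - 3 * Nat.choose (n / 3) 2 := by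
  have h1 := two_mul_card_lt_and c
  have h2 := card_ne_add_sum_sq c
  have h3 : ∑ i, #{v | c v = i} = n := by
    have := Finset.card_eq_sum_card_fiberwise (s := (univ : Finset (Fin n))) (f := c)
      (t := univ) (fun _ _ => by simp)
    simpa using this.symm
  have h4 := two_mul_choose_two_add n
  have h5 := two_mul_choose_two_add (n / 3)
  rw [Fin.sum_univ_three] at h2 h3
  rw [← h1] at h2
  have e0 := hc 0
  have e1 := hc 1
  have e2 := hc 2
  generalize #{p : Fin n × Fin n | p.1 < p.2 ∧ c p.1 ≠ c p.2} = D at *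
  generalize #{v | c v = 0} = x at *
  generalize #{v | c v = 1} = y at *
  generalize #{v | c v = 2} = z at *
  have hn := Nat.div_add_mod n 3
  have hlt := Nat.mod_lt n (show 3 > 0 by norm_num)
  generalize n.choose 2 = P at *
  generalize (n / 3).choose 2 = Q at *
  generalize n % 3 = r at *
  generalize n / 3 = k at *
  suffices h : D + k * r + 3 * Q = P by omega
  have hx : x = k ∨ x = k + 1 := by omega
  have hy : y = k ∨ y = k + 1 := by omega
  have hz : z = k ∨ z = k + 1 := by omega
  have hr : r = 0 ∨ r = 1 ∨ r = 2 := by omega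
  clear h1 hc
  rcases hr with rfl | rfl | rfl <;> rcases hx with rfl | rfl <;>
    rcases hy with rfl | rfl <;> rcases hz with rfl | rfl <;>
  first
  | omega
  | subst hn
    ring_nf at h2 h4 h5 ⊢
    omega

lemma exists_matrix_of_equitable {n : ℕ} (hn : 2 ≤ n) (G : SimpleGraph (Fin n))
    (h : HasEquitableThreeColoring G) :
    ∃ X : Matrix (Fin 2) (Fin n) (ZMod 2),
      X.rank = 2 ∧
      (∀ j : Fin n, (fun i => X i j) ≠ 0) ∧
      (∀ j k : Fin n, G.Adj j k → (fun i => X i j) ≠ (fun i => X i k)) ∧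
      (Finset.univ.filter
          (fun p : Fin n × Fin n =>
            p.1 < p.2 ∧ (fun i => X i p.1) ≠ (fun i => X i p.2))).card =
        Nat.choose n 2 - (n / 3) * (n % 3) - 3 * Nat.choose (n / 3) 2 := by
  obtain ⟨c, hc, hs⟩ := h
  rw [Fintype.card_fin] at hs
  refine ⟨Matrix.of fun i j => nonzeroVec (c j) i, ?_, ?_, ?_, ?_⟩
  · -- a class has fewer than `n` elements, so two columns differ
    obtain ⟨j, k, hjk⟩ : ∃ j k, c j ≠ c k := by
      by_contra! hcon
      have := (hs (c ⟨0, by omega⟩)).2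
      rw [Finset.filter_true_of_mem (fun v _ => hcon v _), card_univ, Fintype.card_fin] at this
      omega
    apply le_antisymm (Matrix.rank_le_height _)
    refine le_trans ?_ (Matrix.rank_submatrix_le
      (Matrix.of fun i j => nonzeroVec (c j) i) id ![j, k])
    rw [Matrix.rank_of_isUnit]
    · simp
    · rw [Matrix.isUnit_iff_isUnit_det, isUnit_iff_ne_zero, Matrix.det_fin_two]
      simpa using det_nonzeroVec _ _ hjk
  · intro j
    exact nonzeroVec_ne_zero (c j)
  · intro j k hjk
    exact fun h => hc j k hjk (nonzeroVec_injective h)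
  · rw [← card_pairs_of_equitable c hs]
    congr 1
    ext p
    rw [mem_filter, mem_filter]
    refine and_congr_right fun _ => ?_
    exact and_congr_right fun _ => not_congr nonzeroVec_injective.eq_iff

/-! ### Assembling an equitable coloring from a bipartition -/

section Forest

set_option linter.unusedSectionVars false

variable {V : Type*} [Fintype V] [DecidableEq V] {G : SimpleGraph V}

/-- `B` and its complement are the two sides of a bipartition of `G`. -/
def IsSide (G : SimpleGraph V) (B : Finset V) : Prop :=
  ∀ ⦃u v⦄, G.Adj u v → (u ∈ B ↔ v ∉ B)

lemma IsSide.compl {B : Finset V} (h : IsSide G B) : IsSide G Bᶜ := by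
  intro u v huv
  rw [mem_compl, mem_compl, h huv]

/-- Two disjoint independent sets with independent complement, of the sizes of two classes of an
equitable partition, form an equitable coloring together with that complement. The term
`n % 3 / 2` is `1` exactly when two of the classes have to be large. -/
lemma equitable_of_sets (S T : Finset V) (hST : Disjoint S T)
    (hS : ∀ u ∈ S, ∀ v ∈ S, ¬ G.Adj u v) (hT : ∀ u ∈ T, ∀ v ∈ T, ¬ G.Adj u v)
    (hR : ∀ u v, u ∉ S → u ∉ T → v ∉ S → v ∉ T → ¬ G.Adj u v)
    (cS : #S = Fintype.card V / 3)
    (cT : #T = Fintype.card V / 3 + Fintype.card V % 3 / 2) :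
    HasEquitableThreeColoring G := by
  refine ⟨fun v => if v ∈ S then 0 else if v ∈ T then 1 else 2, ?_, ?_⟩
  · intro u v huv
    by_cases h1 : u ∈ S <;> by_cases h2 : u ∈ T <;> by_cases h3 : v ∈ S <;>
      by_cases h4 : v ∈ T <;> simp [h1, h2, h3, h4]
    all_goals first
      | exact hS u h1 v h3 huv
      | exact hT u h2 v h4 huv
      | exact hR u v h1 h2 h3 h4 huv
  · have d : ∀ v, v ∈ S → v ∉ T := fun _ hv => Finset.disjoint_left.1 hST hv
    have e0 : ({v | (if v ∈ S then (0 : Fin 3) else if v ∈ T then 1 else 2) = 0} : Finset V)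
        = S := by
      ext v
      by_cases h1 : v ∈ S <;> by_cases h2 : v ∈ T <;> simp [h1, h2]
    have e1 : ({v | (if v ∈ S then (0 : Fin 3) else if v ∈ T then 1 else 2) = 1} : Finset V)
        = T := by
      ext v
      have := d v
      by_cases h1 : v ∈ S <;> by_cases h2 : v ∈ T <;> simp [h1, h2]
      exact this h1 h2
    have e2 : ({v | (if v ∈ S then (0 : Fin 3) else if v ∈ T then 1 else 2) = 2} : Finset V)
        = (S ∪ T)ᶜ := by
      ext v
      by_cases h1 : v ∈ S <;> by_cases h2 : v ∈ T <;> simp [h1, h2]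
    have c2 := card_compl_add_card (S ∪ T)
    rw [card_union_of_disjoint hST] at c2
    intro i
    fin_cases i
    · simp only [Fin.zero_eta, e0]; omega
    · simp only [Fin.mk_one, e1]; omega
    · simp only [Fin.reduceFinMk, e2]; omega

/-- Split one side `B` of a bipartition as `B₁ ∪ B₂`, and enlarge the two parts by disjoint sets
`X`, `Y` from the other side which keep them independent. If the enlarged sets are big enough,
they can be trimmed on the other side, and everything left over is independent. -/
lemma equitable_of_split {B : Finset V} (hB : IsSide G B) (B₁ B₂ X Y : Finset V)
    (h12 : Disjoint B₁ B₂) (hU : B₁ ∪ B₂ = B) (hXY : Disjoint X Y)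
    (hX : X ⊆ Bᶜ) (hY : Y ⊆ Bᶜ)
    (hX1 : ∀ x ∈ X, ∀ b ∈ B₁, ¬ G.Adj x b) (hY2 : ∀ y ∈ Y, ∀ b ∈ B₂, ¬ G.Adj y b)
    (c1 : #B₁ ≤ Fintype.card V / 3)
    (c1' : Fintype.card V / 3 ≤ #B₁ + #X)
    (c2 : #B₂ ≤ Fintype.card V / 3 + Fintype.card V % 3 / 2)
    (c2' : Fintype.card V / 3 + Fintype.card V % 3 / 2 ≤ #B₂ + #Y) :
    HasEquitableThreeColoring G := by
  have m1 : ∀ v ∈ B₁, v ∈ B := fun v hv => hU ▸ mem_union_left _ hv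
  have m2 : ∀ v ∈ B₂, v ∈ B := fun v hv => hU ▸ mem_union_right _ hv
  obtain ⟨X', hX', cX'⟩ := exists_subset_card_eq
    (show Fintype.card V / 3 - #B₁ ≤ #X by omega)
  obtain ⟨Y', hY', cY'⟩ := exists_subset_card_eq
    (show Fintype.card V / 3 + Fintype.card V % 3 / 2 - #B₂ ≤ #Y by omega)
  have nX : ∀ v ∈ X', v ∉ B := fun v hv => mem_compl.1 (hX (hX' hv))
  have nY : ∀ v ∈ Y', v ∉ B := fun v hv => mem_compl.1 (hY (hY' hv))
  have dX : Disjoint B₁ X' := disjoint_left.2 fun v hv hv' => nX v hv' (m1 v hv)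
  have dY : Disjoint B₂ Y' := disjoint_left.2 fun v hv hv' => nY v hv' (m2 v hv)
  refine equitable_of_sets (B₁ ∪ X') (B₂ ∪ Y') ?_ ?_ ?_ ?_ ?_ ?_
  · rw [disjoint_left]
    intro v hv hv'
    rw [mem_union] at hv hv'
    rcases hv with hv | hv <;> rcases hv' with hv' | hv'
    · exact disjoint_left.1 h12 hv hv'
    · exact nY v hv' (m1 v hv)
    · exact nX v hv (m2 v hv')
    · exact disjoint_left.1 hXY (hX' hv) (hY' hv')
  · intro u hu v hv huv
    rw [mem_union] at hu hv
    have := hB huv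
    rcases hu with hu | hu <;> rcases hv with hv | hv
    · exact this.1 (m1 u hu) (m1 v hv)
    · exact hX1 v (hX' hv) u hu huv.symm
    · exact hX1 u (hX' hu) v hv huv
    · exact nX u hu (this.2 (nX v hv))
  · intro u hu v hv huv
    rw [mem_union] at hu hv
    have := hB huv
    rcases hu with hu | hu <;> rcases hv with hv | hv
    · exact this.1 (m2 u hu) (m2 v hv)
    · exact hY2 v (hY' hv) u hu huv.symm
    · exact hY2 u (hY' hu) v hv huv
    · exact nY u hu (this.2 (nY v hv))
  · intro u v hu1 hu2 hv1 hv2 huv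
    have key : ∀ w, w ∉ B₁ ∪ X' → w ∉ B₂ ∪ Y' → w ∉ B := by
      intro w h1 h2 h
      rw [← hU, mem_union] at h
      rcases h with h | h
      · exact h1 (mem_union_left _ h)
      · exact h2 (mem_union_left _ h)
    exact key u hu1 hu2 ((hB huv).2 (key v hv1 hv2))
  · rw [card_union_of_disjoint dX]; omega
  · rw [card_union_of_disjoint dY]; omega

/-! ### Degree sums in forests -/

variable [DecidableRel G.Adj]

lemma card_edgeFinset_lt_of_isAcyclic [Nonempty V] (hG : G.IsAcyclic) :
    #G.edgeFinset + 1 ≤ Fintype.card V := by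
  classical
  obtain ⟨T, hGT, -, hT⟩ := (SimpleGraph.connected_top (V := V)).exists_isTree_le_of_le_of_isAcyclic
    (le_top : G ≤ ⊤) hG
  rw [← hT.card_edgeFinset]
  exact Nat.add_le_add_right (card_le_card (SimpleGraph.edgeFinset_mono hGT)) 1

lemma sum_degree_side [Nonempty V] (hG : G.IsAcyclic) {B : Finset V} (hB : IsSide G B) :
    ∑ v ∈ B, G.degree v + 1 ≤ Fintype.card V := by
  refine le_trans (Nat.add_le_add_right (le_of_eq ?_) 1) (card_edgeFinset_lt_of_isAcyclic hG)
  refine SimpleGraph.isBipartiteWith_sum_degrees_eq_card_edges (t := Bᶜ) ⟨?_, ?_⟩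
  · rw [disjoint_coe]; exact disjoint_compl_right
  · intro v w hvw
    have := hB hvw
    simp only [mem_coe, mem_compl]
    tauto

/-- The `t` cheapest elements have at most average total cost. -/
lemma exists_cheap_subset (B : Finset V) (f : V → ℕ) (t : ℕ) (ht : t ≤ #B) :
    ∃ S ⊆ B, #S = t ∧ #B * ∑ v ∈ S, f v ≤ t * ∑ v ∈ B, f v := by
  induction B using Finset.strongInduction generalizing t with
  | H B ih =>
    rcases ht.eq_or_lt with rfl | ht
    · exact ⟨B, Subset.rfl, rfl, le_rfl⟩
    -- discard an element of maximal cost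
    obtain ⟨m, hm, hmax⟩ := exists_max_image B f (card_pos.1 (by omega))
    have hc := card_erase_add_one hm
    obtain ⟨S, hS, cS, hle⟩ := ih (B.erase m) (erase_ssubset hm) t (by omega)
    refine ⟨S, hS.trans (erase_subset _ _), cS, ?_⟩
    have h1 := add_sum_erase B f hm
    have h2 : ∑ v ∈ S, f v ≤ t * f m := by
      rw [← cS, ← smul_eq_mul]
      exact sum_le_card_nsmul _ _ _ fun v hv => hmax v (mem_of_mem_erase (hS hv))
    rw [← hc, ← h1]
    nlinarith

/-- If both sides of a bipartition have at least `⌊n/3⌋` elements, no degree condition is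
needed: the cheapest surplus vertices `B'` of the smaller side have few neighbours, so they can
be joined by enough vertices of the larger side. -/
lemma equitable_of_balanced (hG : G.IsAcyclic) (hn : 2 ≤ Fintype.card V) {B : Finset V}
    (hB : IsSide G B) (h1 : Fintype.card V / 3 ≤ #B) (h2 : #B ≤ #Bᶜ) :
    HasEquitableThreeColoring G := by
  have : Nonempty V := Fintype.card_pos_iff.1 (by omega)
  have hsum := sum_degree_side hG hB
  have hc := card_compl_add_card B
  obtain ⟨B', hB', cB', hle⟩ := exists_cheap_subset B (fun v => G.degree v)
    (#B - Fintype.card V / 3) (by omega)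
  have cN : #(B'.biUnion fun v => G.neighborFinset v) ≤ ∑ v ∈ B', G.degree v := by
    refine card_biUnion_le.trans (le_of_eq ?_)
    simp
  have hs : ∑ v ∈ B', G.degree v + 1 ≤ Fintype.card V / 3 + Fintype.card V % 3 := by
    by_contra! hcon
    have hdm := Nat.div_add_mod (Fintype.card V) 3
    obtain ⟨t, ht⟩ : ∃ t, #B = Fintype.card V / 3 + t := ⟨_, (Nat.add_sub_of_le h1).symm⟩
    rw [ht] at hle hc h2
    rw [Nat.add_sub_cancel_left] at hle
    have hs0 : #B' = 0 → ∑ v ∈ B', G.degree v = 0 := by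
      intro h
      rw [card_eq_zero.1 h, sum_empty]
    generalize ∑ v ∈ B', G.degree v = s at *
    generalize ∑ v ∈ B, G.degree v = D at *
    generalize Fintype.card V / 3 = k at *
    generalize Fintype.card V % 3 = r at *
    generalize Fintype.card V = n at *
    have a1 : (k + t) * (k + r) ≤ t * D := le_trans (Nat.mul_le_mul_left _ (by omega)) hle
    have a2 : t * D + t ≤ t * (3 * k + r) := by nlinarith
    have a3 : 2 * t ≤ k + r := by omega
    have a5 : k * (k + r) + t ≤ 2 * k * t := by nlinarith
    have a6 : 2 * t * k ≤ (k + r) * k := Nat.mul_le_mul_right _ a3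
    have a7 : t = 0 := by nlinarith
    subst a7
    have := hs0 (by omega)
    omega
  refine equitable_of_split hB (B \ B') B' ∅ (Bᶜ \ B'.biUnion fun v => G.neighborFinset v)
    sdiff_disjoint (sdiff_union_of_subset hB') (disjoint_empty_left _) (empty_subset _)
    sdiff_subset (by simp) ?_ ?_ ?_ ?_ ?_
  · intro y hy b hb hyb
    rw [mem_sdiff, mem_biUnion] at hy
    exact hy.2 ⟨b, hb, by simpa using hyb.symm⟩
  · rw [card_sdiff_of_subset hB']; omega
  · rw [card_sdiff_of_subset hB']; omega
  · omega
  · have := le_card_sdiff (B'.biUnion fun v => G.neighborFinset v) Bᶜ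
    omega

/-! ### Unbalanced bipartitions -/

/-- Subset sums: if no weight reaches `p` but the total does, some subset sum lies in
`[p, 2p - 2]`. -/
lemma exists_subset_sum_of_small (g : V → ℤ) (p : ℤ) (B : Finset V)
    (hg : ∀ b ∈ B, g b ≤ p - 1) (hsum : p ≤ ∑ b ∈ B, g b) (hp : 1 ≤ p) :
    ∃ S ⊆ B, p ≤ ∑ b ∈ S, g b ∧ ∑ b ∈ S, g b ≤ 2 * p - 2 := by
  induction B using Finset.induction_on with
  | empty => simp at hsum; omega
  | insert a s ha ih =>
    by_cases hs : p ≤ ∑ b ∈ s, g b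
    · obtain ⟨S, hS, h⟩ := ih (fun b hb => hg b (mem_insert_of_mem hb)) hs
      exact ⟨S, hS.trans (subset_insert _ _), h⟩
    · refine ⟨insert a s, Subset.rfl, hsum, ?_⟩
      rw [sum_insert ha]
      have := hg a (mem_insert_self _ _)
      omega

/-- The leaves of `G` outside `B` whose neighbour lies in `S`. -/
def leavesAt (G : SimpleGraph V) [DecidableRel G.Adj] (B S : Finset V) : Finset V :=
  {a ∈ Bᶜ | G.degree a = 1 ∧ ∃ b ∈ S, G.Adj a b}

lemma eq_of_degree_one {a b b' : V} (h : G.degree a = 1) (hb : G.Adj a b) (hb' : G.Adj a b') :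
    b = b' := by
  obtain ⟨w, -, hw⟩ := SimpleGraph.degree_eq_one_iff_existsUnique_adj.1 h
  exact (hw b hb).trans (hw b' hb').symm

lemma card_leavesAt (B S : Finset V) :
    #(leavesAt G B S) = ∑ b ∈ S, #(leavesAt G B {b}) := by
  rw [← card_biUnion]
  · congr 1
    ext a
    simp only [leavesAt, mem_filter, mem_biUnion, mem_singleton, exists_eq_left]
    tauto
  · intro b _ b' _ hne
    rw [Function.onFun, disjoint_left]
    intro a ha ha'
    simp only [leavesAt, mem_filter, mem_singleton, exists_eq_left] at ha ha'
    exact hne (eq_of_degree_one ha.2.1 ha.2.2 ha'.2.2)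

/-- Without isolated vertices on the side `Bᶜ`, fewer than `#B` vertices of `Bᶜ` are
non-leaves, because the degrees on that side add up to less than `#B + #Bᶜ`. -/
lemma card_compl_lt_leaves_add [Nonempty V] (hG : G.IsAcyclic) {B : Finset V} (hB : IsSide G B)
    (hiso : ∀ a ∉ B, G.degree a ≠ 0) :
    #Bᶜ + 1 ≤ #(leavesAt G B B) + #B := by
  have hsum := sum_degree_side hG hB.compl
  have hc := card_compl_add_card B
  have hL : leavesAt G B B = {a ∈ Bᶜ | G.degree a = 1} := by
    ext a
    simp only [leavesAt, mem_filter, mem_compl, and_congr_right_iff, and_iff_left_iff_imp]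
    intro ha h
    obtain ⟨w, hw, -⟩ := SimpleGraph.degree_eq_one_iff_existsUnique_adj.1 h
    exact ⟨w, by_contra fun h => ha ((hB hw).2 h), hw⟩
  have h2 : ∑ a ∈ Bᶜ, 2 ≤ ∑ a ∈ Bᶜ, (G.degree a + if G.degree a = 1 then 1 else 0) := by
    refine sum_le_sum fun a ha => ?_
    have := hiso a (mem_compl.1 ha)
    split_ifs <;> omega
  rw [sum_add_distrib, ← card_filter, ← hL, sum_const, smul_eq_mul] at h2
  omega

/-- The unbalanced case: the smaller side has fewer than `⌊n/3⌋` elements. -/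
lemma equitable_of_unbalanced (hG : G.IsAcyclic) {B : Finset V} (hB : IsSide G B)
    (h1 : #B + 1 ≤ Fintype.card V / 3) (hiso : ∀ a ∉ B, G.degree a ≠ 0)
    (hd : ∀ v, G.degree v ≤ Fintype.card V / 3 + Fintype.card V % 3 + 2) :
    HasEquitableThreeColoring G := by
  have : Nonempty V := Fintype.card_pos_iff.1 (by omega)
  have hc := card_compl_add_card B
  have hL := card_compl_lt_leaves_add hG hB hiso
  have hsub : ∀ S, leavesAt G B S ⊆ Bᶜ := fun S => filter_subset _ _
  -- a leaf at one part of `B` has no neighbour in a disjoint part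
  have hdisj : ∀ S T, Disjoint S T → ∀ y ∈ leavesAt G B S, ∀ b ∈ T, ¬ G.Adj y b := by
    intro S T hST y hy b hb hyb
    simp only [leavesAt, mem_filter] at hy
    obtain ⟨-, hy1, b', hb', hyb'⟩ := hy
    exact disjoint_left.1 hST hb' (eq_of_degree_one hy1 hyb hyb' ▸ hb)
  have hdisj' : ∀ S T, Disjoint S T → Disjoint (leavesAt G B S) (leavesAt G B T) := by
    intro S T hST
    rw [disjoint_left]
    intro a ha ha'
    simp only [leavesAt, mem_filter] at ha'
    obtain ⟨-, -, b, hb, hab⟩ := ha'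
    exact hdisj S T hST a ha b hb hab
  by_cases hbig : ∃ b ∈ B,
      #(leavesAt G B B) + 2 ≤ #(leavesAt G B {b}) + Fintype.card V / 3
  · -- one vertex `b` carries most of the leaves: put it in another class than the rest of `B`
    obtain ⟨b, hb, hbl⟩ := hbig
    have hdeg := hd b
    refine equitable_of_split hB {b} (B.erase b) (Bᶜ \ G.neighborFinset b) (leavesAt G B {b})
      ?_ ?_ ?_ sdiff_subset (hsub _) ?_ ?_ ?_ ?_ ?_ ?_
    · simp
    · rw [← insert_eq, insert_erase hb]
    · rw [disjoint_left]
      intro a ha ha'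
      simp only [leavesAt, mem_filter, mem_singleton, exists_eq_left] at ha'
      exact (mem_sdiff.1 ha).2 (by simpa using ha'.2.2.symm)
    · intro x hx b' hb' hxb
      rw [mem_singleton] at hb'
      subst hb'
      exact (mem_sdiff.1 hx).2 (by simpa using hxb.symm)
    · exact hdisj _ _ (by simp)
    · have := card_pos.2 ⟨b, hb⟩
      rw [card_singleton]; omega
    · have := le_card_sdiff (G.neighborFinset b) Bᶜ
      rw [SimpleGraph.card_neighborFinset_eq_degree] at this
      rw [card_singleton]; omega
    · rw [card_erase_of_mem hb]; omega
    · rw [card_erase_of_mem hb]; omega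
  · push Not at hbig
    -- otherwise split `B` so that both parts, with the leaves of the other part, are large
    obtain ⟨S, hS, hlo, hhi⟩ : ∃ S ⊆ B,
        Fintype.card V / 3 + #S ≤ #(leavesAt G B S) + #B ∧
        #(leavesAt G B S) + Fintype.card V / 3 ≤ #(leavesAt G B B) + #S := by
      have hsumS : ∀ S : Finset V, ∑ b ∈ S, ((#(leavesAt G B {b}) : ℤ) - 1) =
          #(leavesAt G B S) - #S := by
        intro S
        rw [sum_sub_distrib, card_leavesAt B S]
        simp
      by_cases hone : ∃ b ∈ B,
          (Fintype.card V / 3 : ℕ) - (#B : ℤ) ≤ (#(leavesAt G B {b}) : ℤ) - 1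
      · obtain ⟨b, hb, hbl⟩ := hone
        have := hbig b hb
        refine ⟨{b}, by simpa using hb, ?_, ?_⟩ <;> rw [card_singleton] <;> omega
      · push Not at hone
        obtain ⟨S, hS, h3, h4⟩ := exists_subset_sum_of_small
          (fun b => (#(leavesAt G B {b}) : ℤ) - 1) ((Fintype.card V / 3 : ℕ) - (#B : ℤ)) B
          (fun b hb => by have := hone b hb; omega) (by rw [hsumS]; omega) (by omega)
        rw [hsumS] at h3 h4
        exact ⟨S, hS, by omega, by omega⟩
    have hSc : #(B \ S) + #S = #B := card_sdiff_add_card_eq_card hS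
    have hLS : #(leavesAt G B (B \ S)) + #(leavesAt G B S) = #(leavesAt G B B) := by
      rw [card_leavesAt B (B \ S), card_leavesAt B S, card_leavesAt B B]
      exact sum_sdiff hS
    -- only one of the two classes is certain to reach the larger size
    by_cases hlarge : Fintype.card V / 3 + 1 ≤ #S + #(leavesAt G B (B \ S))
    · refine equitable_of_split hB (B \ S) S (leavesAt G B S) (leavesAt G B (B \ S))
        sdiff_disjoint (sdiff_union_of_subset hS) (hdisj' _ _ disjoint_sdiff) (hsub _) (hsub _)
        (hdisj _ _ disjoint_sdiff) (hdisj _ _ sdiff_disjoint) ?_ ?_ ?_ ?_ <;> omega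
    · refine equitable_of_split hB S (B \ S) (leavesAt G B (B \ S)) (leavesAt G B S)
        disjoint_sdiff (union_sdiff_of_subset hS) (hdisj' _ _ sdiff_disjoint) (hsub _) (hsub _)
        (hdisj _ _ sdiff_disjoint) (hdisj _ _ disjoint_sdiff) ?_ ?_ ?_ ?_ <;> omega

/-! ### Equitable 3-colorings of forests -/

lemma exists_isSide (hG : G.IsAcyclic) : ∃ B, IsSide G B ∧ #B ≤ #Bᶜ := by
  obtain ⟨c⟩ := hG.colorable_two
  have h : IsSide G {v | c v = 0} := by
    intro u v huv
    have := c.valid huv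
    simp only [mem_filter, mem_univ, true_and]
    omega
  rcases le_total (#({v | c v = 0} : Finset V)) (#({v | c v = 0} : Finset V)ᶜ) with h' | h'
  · exact ⟨_, h, h'⟩
  · exact ⟨_, h.compl, by rwa [compl_compl]⟩

theorem equitable_of_isAcyclic (hG : G.IsAcyclic) (hn : 2 ≤ Fintype.card V)
    (hd : ∀ v, G.degree v ≤ Fintype.card V / 3 + Fintype.card V % 3 + 2) :
    HasEquitableThreeColoring G := by
  classical
  obtain ⟨B₀, hB₀⟩ := exists_isSide hG
  -- a bipartition whose smaller side is as large as possible
  obtain ⟨B, hB, hmax⟩ := exists_max_image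
    ({B | IsSide G B ∧ #B ≤ #Bᶜ} : Finset (Finset V)) card ⟨B₀, by simpa using hB₀⟩
  simp only [mem_filter, mem_univ, true_and] at hB hmax
  by_cases h1 : Fintype.card V / 3 ≤ #B
  · exact equitable_of_balanced hG hn hB.1 h1 hB.2
  refine equitable_of_unbalanced hG hB.1 (by omega) ?_ hd
  -- an isolated vertex of the larger side could be moved to the smaller one
  intro a ha hdeg
  have hnadj : ∀ w, ¬ G.Adj a w := by
    intro w hw
    have := (G.degree_pos_iff_exists_adj a).2 ⟨w, hw⟩
    omega
  have hcard := card_insert_of_notMem ha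
  have hc := card_compl_add_card B
  have hc' := card_compl_add_card (insert a B)
  have := hmax (insert a B) ⟨?_, by omega⟩
  · omega
  · intro u v huv
    have hu : u ≠ a := by rintro rfl; exact hnadj v huv
    have hv : v ≠ a := by rintro rfl; exact hnadj u huv.symm
    rw [mem_insert, mem_insert]
    simpa [hu, hv] using hB.1 huv

end Forest

/-- Bollobás–Guy: if `G` is an acyclic requirements graph on `n` vertices whose maximum
degree `d` satisfies `3d ≤ n + 8` or `3d = n + 10`, then a `2^n` factorial in blocks of
size four exists providing all required estimates and achieving the bound
`φ_max = C(n,2) - v·w - 3·C(v,2)` with `v = n / 3`, `w = n % 3` (equivalently, `G`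
admits an equitable proper 3-coloring). -/
theorem stmt11 (n : ℕ) (hn : 2 ≤ n)
    (G : SimpleGraph (Fin n)) [DecidableRel G.Adj]
    (hG : G.IsAcyclic)
    (hd : 3 * G.maxDegree ≤ n + 8 ∨ 3 * G.maxDegree = n + 10) :
    ∃ X : Matrix (Fin 2) (Fin n) (ZMod 2),
      X.rank = 2 ∧
      (∀ j : Fin n, (fun i => X i j) ≠ 0) ∧
      (∀ j k : Fin n, G.Adj j k → (fun i => X i j) ≠ (fun i => X i k)) ∧
      (Finset.univ.filter
          (fun p : Fin n × Fin n =>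
            p.1 < p.2 ∧ (fun i => X i p.1) ≠ (fun i => X i p.2))).card =
        Nat.choose n 2 - (n / 3) * (n % 3) - 3 * Nat.choose (n / 3) 2 := by
  refine exists_matrix_of_equitable hn G (equitable_of_isAcyclic hG (by simpa using hn) ?_)
  intro v
  have := G.degree_le_maxDegree v
  rw [Fintype.card_fin]
  omega
end

section
/- Let n ≥ 2 and let G be an acyclic simple graph on Fin n in which every vertex has degree at most 4. Then there exists a matrix X : Matrix (Fin 2) (Fin n) (ZMod 2) of rank 2 such that every column of X is nonzero, for all j, k with G.Adj j k the j-th and k-th columns of X differ, and the number of unordered pairs {j, k} of distinct indices with differing columns equals φ_max = C(n, 2) − v·w − 3·C(v, 2) where v = n / 3 (integer division), w = n % 3 and C(a, 2) = a(a−1)/2. (Equivalently, a 2^n factorial in blocks of size four exists which yields all required estimates and achieves the bound φ_max.) -/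
/-!
The three nonzero vectors of `GF(2)²` serve as colours, so a suitable `X` is a proper 3-colouring
of the forest `G`. Equal-coloured pairs number `∑ i, C(nᵢ, 2)` for class sizes `nᵢ`, and this is
`v * w + 3 * C(v, 2)` exactly when the colouring is equitable (class sizes differ by at most one).
The theorem thus amounts to: a forest of maximum degree at most 4 has an equitable 3-colouring.

This is proved by induction, deleting three vertices at a time (`exists_equitable_on`). If distinct
`x`, `y`, `z` have at most 2, 1, 0 neighbours respectively among the remaining vertices, then an
equitable colouring of the rest extends greedily, in the order `x`, `y`, `z`, with three different
colours on `x`, `y`, `z`, and each class grows by one.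

Such a triple always exists (`exists_extendable_triple`). The only property of forests needed is
that every nonempty vertex set `t` contains a vertex with at most one neighbour in `t`
(`exists_adj_card_le_one`). Applied to the set of non-leaves it gives a non-leaf `p` all of whose
neighbours but at most one are leaves. If `p` has degree 4, it has two leaf neighbours `a`, `b`, and
`(p, a, b)` works. If `p` has degree 2 or 3, take `x = p`, a leaf neighbour of `p` as `z`, and as
`y` a vertex with at most one neighbour outside `{x, z}`. If there are no non-leaves the graph is
a matching together with isolated vertices, and the triple is immediate.
-/

open Finset in
/-- Forests are 1-degenerate: an endpoint of a longest path in the graph induced on `t` has no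
neighbour in `t` except the next vertex of that path. -/
theorem exists_adj_card_le_one {V : Type*} [DecidableEq V] (G : SimpleGraph V)
    [DecidableRel G.Adj] (hG : G.IsAcyclic) (t : Finset V) (ht : t.Nonempty) :
    ∃ v ∈ t, #{u ∈ t | G.Adj v u} ≤ 1 := by
  have hH : (G.induce (t : Set V)).IsAcyclic := hG.induce _
  have : Nonempty (t : Set V) := ht.to_subtype
  obtain ⟨u, v, p, hp, hmax⟩ :=
    SimpleGraph.Walk.exists_isPath_forall_isPath_length_le_length (G.induce (t : Set V))
  have hsnd : ∀ w : (t : Set V), G.Adj u w → w = p.snd := by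
    intro w hw
    have hw' : (G.induce (t : Set V)).Adj u w := hw
    refine hH.eq_snd_of_adj_start hp hw' ?_
    by_contra hns
    have := hmax _ _ _ (hp.cons (h := hw'.symm) hns)
    simp at this
  refine ⟨u, u.2, card_le_one.2 fun a ha b hb => ?_⟩
  rw [mem_filter] at ha hb
  exact congrArg Subtype.val ((hsnd ⟨a, ha.1⟩ ha.2).trans (hsnd ⟨b, hb.1⟩ hb.2).symm)

open Finset in
/-- In a 1-degenerate graph of maximum degree at most 4 on at least three vertices, there are
`x`, `y`, `z` with at most 2, 1, 0 neighbours outside the triple: exactly what is needed to give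
them three different colours after the other vertices have been coloured. -/
theorem exists_extendable_triple {V : Type*} [DecidableEq V] (G : SimpleGraph V)
    [DecidableRel G.Adj]
    (hdeg : ∀ t : Finset V, t.Nonempty → ∃ v ∈ t, #{u ∈ t | G.Adj v u} ≤ 1)
    (s : Finset V) (hs : 3 ≤ #s) (hd : ∀ v ∈ s, #{u ∈ s | G.Adj v u} ≤ 4) :
    ∃ x ∈ s, ∃ y ∈ s, ∃ z ∈ s, x ≠ y ∧ x ≠ z ∧ y ≠ z ∧
      #{u ∈ s \ {x, y, z} | G.Adj x u} ≤ 2 ∧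
      #{u ∈ s \ {x, y, z} | G.Adj y u} ≤ 1 ∧
      #{u ∈ s \ {x, y, z} | G.Adj z u} = 0 := by
  -- It suffices to find `x` and `z`: degeneracy of `s \ {x, z}` then provides `y`.
  have pair : ∀ x ∈ s, ∀ z ∈ s, x ≠ z → (∀ u ∈ s, G.Adj z u → u = x) →
      #{u ∈ s \ {x, z} | G.Adj x u} ≤ 2 →
      ∃ x ∈ s, ∃ y ∈ s, ∃ z ∈ s, x ≠ y ∧ x ≠ z ∧ y ≠ z ∧
      #{u ∈ s \ {x, y, z} | G.Adj x u} ≤ 2 ∧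
      #{u ∈ s \ {x, y, z} | G.Adj y u} ≤ 1 ∧
      #{u ∈ s \ {x, y, z} | G.Adj z u} = 0 := by
    intro x hx z hz hxz hzx hx2
    have hne : (s \ {x, z}).Nonempty := by
      rw [← card_pos]
      have := le_card_sdiff {x, z} s
      have := card_pair hxz
      omega
    obtain ⟨y, hy, hy1⟩ := hdeg _ hne
    simp only [mem_sdiff, mem_insert, mem_singleton, not_or] at hy
    refine ⟨x, hx, y, hy.1, z, hz, Ne.symm hy.2.1, hxz, hy.2.2, ?_, ?_, ?_⟩
    · refine le_trans (card_le_card ?_) hx2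
      intro u; simp; tauto
    · refine le_trans (card_le_card ?_) hy1
      intro u; simp; tauto
    · rw [card_eq_zero, filter_eq_empty_iff]
      intro u hu ha
      simp only [mem_sdiff, mem_insert, mem_singleton, not_or] at hu
      exact hu.2.1 (hzx u hu.1 ha)
  -- `T` is the set of non-leaves; isolated vertices count as leaves.
  set T : Finset V := {v ∈ s | 2 ≤ #{u ∈ s | G.Adj v u}} with hT
  have leaf : ∀ p ∈ s, ∀ l ∈ s, l ∉ T → G.Adj p l → ∀ u ∈ s, G.Adj l u → u = p := by
    intro p hp l hl hlT hpl u hu hlu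
    have h1 : #{u ∈ s | G.Adj l u} ≤ 1 := by
      simp only [hT, mem_filter, not_and, not_le] at hlT
      have := hlT hl
      omega
    rw [card_le_one] at h1
    exact h1 u (by simp [hu, hlu]) p (by simp [hp, hpl.symm])
  by_cases hTe : T.Nonempty
  · obtain ⟨p, hpT, hp1⟩ := hdeg T hTe
    have hp : p ∈ s := (mem_filter.1 hpT).1
    have hp2 : 2 ≤ #{u ∈ s | G.Adj p u} := (mem_filter.1 hpT).2
    have hp4 := hd p hp
    have hsplit : #{u ∈ s | G.Adj p u} = #{u ∈ T | G.Adj p u} + #{u ∈ s \ T | G.Adj p u} := by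
      rw [← card_union_of_disjoint]
      · congr 1
        rw [← filter_union, union_sdiff_of_subset (filter_subset _ _)]
      · exact disjoint_filter_filter disjoint_sdiff
    by_cases h4 : #{u ∈ s | G.Adj p u} ≤ 3
    · obtain ⟨l, hl⟩ : ({u ∈ s \ T | G.Adj p u} : Finset V).Nonempty := by
        rw [← card_pos]; omega
      simp only [mem_filter, mem_sdiff] at hl
      refine pair p hp l hl.1.1 hl.2.ne (leaf p hp l hl.1.1 hl.1.2 hl.2) ?_
      have : #{u ∈ s \ {p, l} | G.Adj p u} < #{u ∈ s | G.Adj p u} := by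
        apply card_lt_card
        rw [ssubset_iff_of_subset]
        · exact ⟨l, by simp [hl]⟩
        · exact filter_subset_filter _ sdiff_subset
      omega
    · obtain ⟨a, ha, b, hb, hab⟩ : ∃ a ∈ ({u ∈ s \ T | G.Adj p u} : Finset V),
          ∃ b ∈ ({u ∈ s \ T | G.Adj p u} : Finset V), a ≠ b := by
        apply one_lt_card.1; omega
      simp only [mem_filter, mem_sdiff] at ha hb
      have key : ∀ l ∈ s, l ∉ T → G.Adj p l → #{u ∈ s \ {p, a, b} | G.Adj l u} = 0 := by
        intro l hl hlT hpl
        rw [card_eq_zero, filter_eq_empty_iff]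
        intro u hu hlu
        simp only [mem_sdiff, mem_insert, mem_singleton, not_or] at hu
        exact hu.2.1 (leaf p hp l hl hlT hpl u hu.1 hlu)
      refine ⟨p, hp, a, ha.1.1, b, hb.1.1, ha.2.ne, hb.2.ne, hab, ?_,
        (key a ha.1.1 ha.1.2 ha.2).le.trans zero_le_one, key b hb.1.1 hb.1.2 hb.2⟩
      have hsub : ({u ∈ s \ {p, a, b} | G.Adj p u} : Finset V) ⊆
          ({u ∈ s | G.Adj p u} : Finset V) \ {a, b} := by
        intro u; simp; tauto
      have h := card_le_card hsub
      rw [card_sdiff_of_subset, card_pair hab] at h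
      · omega
      · intro u; simp only [mem_insert, mem_singleton, mem_filter]
        rintro (rfl | rfl) <;> tauto
  · have hall : ∀ v ∈ s, #{u ∈ s | G.Adj v u} ≤ 1 := by
      intro v hv
      by_contra h
      exact hTe ⟨v, by simp only [hT, mem_filter]; exact ⟨hv, by omega⟩⟩
    have fin : ∀ x ∈ s, ∀ z, #{u ∈ s \ {x, z} | G.Adj x u} ≤ 2 := fun x hx z =>
      (card_le_card (filter_subset_filter _ sdiff_subset)).trans ((hall x hx).trans one_le_two)
    have hT0 : T = ∅ := not_nonempty_iff_eq_empty.1 hTe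
    obtain ⟨z, hz⟩ : s.Nonempty := by rw [← card_pos]; omega
    by_cases hzn : ∃ x ∈ s, G.Adj x z
    · obtain ⟨x, hx, hxz⟩ := hzn
      exact pair x hx z hz hxz.ne (leaf x hx z hz (by simp [hT0]) hxz) (fin x hx z)
    · push Not at hzn
      obtain ⟨x, hx, hxz⟩ := exists_mem_ne (by omega : 1 < #s) z
      exact pair x hx z hz hxz (fun u hu h => absurd h.symm (hzn u hu)) (fin x hx z)

open Finset in
/-- Equitable 3-colouring of the subgraph induced on `s`; the values of `c` off `s` are arbitrary. -/
theorem exists_equitable_on {V : Type*} [DecidableEq V] (G : SimpleGraph V)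
    [DecidableRel G.Adj]
    (hdeg : ∀ t : Finset V, t.Nonempty → ∃ v ∈ t, #{u ∈ t | G.Adj v u} ≤ 1)
    (s : Finset V) (hd : ∀ v ∈ s, #{u ∈ s | G.Adj v u} ≤ 4) :
    ∃ c : V → Fin 3, (∀ u ∈ s, ∀ v ∈ s, G.Adj u v → c u ≠ c v) ∧
      ∀ i j, #{v ∈ s | c v = i} ≤ #{v ∈ s | c v = j} + 1 := by
  induction s using Finset.strongInduction with
  | H s ih =>
  by_cases hs : 3 ≤ #s
  · obtain ⟨x, hx, y, hy, z, hz, hxy, hxz, hyz, h2, h1, h0⟩ :=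
      exists_extendable_triple G hdeg s hs hd
    set r := s \ {x, y, z} with hr
    have hrs : r ⊆ s := sdiff_subset
    have hxr : x ∉ r := by simp [hr]
    have hyr : y ∉ r := by simp [hr]
    have hzr : z ∉ r := by simp [hr]
    have hsr : s = insert x (insert y (insert z r)) := by
      ext u; simp only [hr, mem_insert, mem_sdiff, mem_singleton]
      constructor
      · tauto
      · rintro (rfl | rfl | rfl | h) <;> tauto
    obtain ⟨c, hc, hcount⟩ := ih r (ssubset_of_subset_of_ne hrs (fun h => hxr (h ▸ hx)))
      (fun v hv => (card_le_card (filter_subset_filter _ hrs)).trans (hd v (hrs hv)))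
    obtain ⟨a, ha⟩ : ∃ a, a ∉ image c {u ∈ r | G.Adj x u} := by
      by_contra! h
      have := (card_le_card (fun i _ => h i : (univ : Finset (Fin 3)) ⊆ _)).trans card_image_le
      simp at this; omega
    obtain ⟨b, hb⟩ : ∃ b, b ∉ insert a (image c {u ∈ r | G.Adj y u}) := by
      by_contra! h
      have := (card_le_card (fun i _ => h i : (univ : Finset (Fin 3)) ⊆ _)).trans
        (card_insert_le _ _)
      have := card_image_le (s := {u ∈ r | G.Adj y u}) (f := c)
      simp at *; omega
    obtain ⟨d, hda, hdb⟩ : ∃ d : Fin 3, d ≠ a ∧ d ≠ b := by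
      clear * -; revert a b; decide
    simp only [mem_insert, mem_image, mem_filter, not_or, not_exists, not_and] at ha hb
    rw [card_eq_zero, filter_eq_empty_iff] at h0
    set c' : V → Fin 3 := fun v => if v = x then a else if v = y then b else if v = z then d else c v
      with hc'
    have cx : c' x = a := by simp [hc']
    have cy : c' y = b := by simp [hc', hxy.symm]
    have cz : c' z = d := by simp [hc', hxz.symm, hyz.symm]
    have cr : ∀ v ∈ r, c' v = c v := by
      intro v hv
      have : v ≠ x := by rintro rfl; exact hxr hv
      have : v ≠ y := by rintro rfl; exact hyr hv
      have : v ≠ z := by rintro rfl; exact hzr hv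
      simp [*]
    -- `a`, `b`, `d` exhaust the colours, so every class gains exactly one vertex.
    have hcnt : ∀ i, #{v ∈ s | c' v = i} = #{v ∈ r | c v = i} + 1 := by
      intro i
      have e : ({v ∈ r | c' v = i} : Finset V) = {v ∈ r | c v = i} :=
        filter_congr (fun v hv => by rw [cr v hv])
      have hi : (a = i ∧ b ≠ i ∧ d ≠ i) ∨ (a ≠ i ∧ b = i ∧ d ≠ i) ∨ (a ≠ i ∧ b ≠ i ∧ d = i) := by
        have := hb.1
        clear * - this hda hdb
        revert a b d i; decide
      rw [hsr, filter_insert, filter_insert, filter_insert, cx, cy, cz, e]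
      rcases hi with ⟨h, h', h''⟩ | ⟨h, h', h''⟩ | ⟨h, h', h''⟩ <;>
        simp only [h, h', h'', if_true, if_false] <;> rw [card_insert_of_notMem] <;>
        simp [hxr, hyr, hzr]
    refine ⟨c', ?_, fun i j => by rw [hcnt, hcnt]; have := hcount i j; omega⟩
    have hX : ∀ v ∈ s, G.Adj x v → c' v ≠ a := by
      intro v hv h
      rw [hsr] at hv
      simp only [mem_insert] at hv
      rcases hv with rfl | rfl | rfl | hv
      · exact absurd h (G.irrefl)
      · rw [cy]; exact hb.1
      · rw [cz]; exact hda
      · rw [cr v hv]; exact ha v ⟨hv, h⟩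
    have hY : ∀ v ∈ s, G.Adj y v → c' v ≠ b := by
      intro v hv h
      rw [hsr] at hv
      simp only [mem_insert] at hv
      rcases hv with rfl | rfl | rfl | hv
      · rw [cx]; exact Ne.symm hb.1
      · exact absurd h (G.irrefl)
      · rw [cz]; exact hdb
      · rw [cr v hv]; exact hb.2 v ⟨hv, h⟩
    have hZ : ∀ v ∈ s, G.Adj z v → c' v ≠ d := by
      intro v hv h
      rw [hsr] at hv
      simp only [mem_insert] at hv
      rcases hv with rfl | rfl | rfl | hv
      · rw [cx]; exact hda.symm
      · rw [cy]; exact hdb.symm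
      · exact absurd h (G.irrefl)
      · exact absurd h (h0 hv)
    intro u hu v hv huv
    have hu' := hu
    have hv' := hv
    rw [hsr] at hu' hv'
    simp only [mem_insert] at hu' hv'
    rcases hu' with rfl | rfl | rfl | hu'
    · rw [cx]; exact (hX v hv huv).symm
    · rw [cy]; exact (hY v hv huv).symm
    · rw [cz]; exact (hZ v hv huv).symm
    rcases hv' with rfl | rfl | rfl | hv'
    · rw [cx]; exact hX u hu huv.symm
    · rw [cy]; exact hY u hu huv.symm
    · rw [cz]; exact hZ u hu huv.symm
    · rw [cr u hu', cr v hv']; exact hc u hu' v hv' huv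
  · -- at most two vertices: an injective colouring
    obtain ⟨f, hf⟩ : ∃ c : V → Fin 3, Set.InjOn c s := by
      obtain ⟨e⟩ : Nonempty (s ↪ Fin 3) :=
        Function.Embedding.nonempty_of_card_le (by simp; omega)
      refine ⟨fun v => if h : v ∈ s then e ⟨v, h⟩ else 0, fun u hu v hv h => ?_⟩
      simp only [mem_coe] at hu hv
      simpa [hu, hv] using h
    refine ⟨f, fun u hu v hv h e => h.ne (hf hu hv e), fun i j => ?_⟩
    have : #{v ∈ s | f v = i} ≤ 1 := by
      rw [card_le_one]
      intro u hu v hv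
      simp only [mem_filter] at hu hv
      exact hf hu.1 hv.1 (hu.2.trans hv.2.symm)
    omega

open Finset in
/-- Ordered pairs of vertices are either of different colours (twice the unordered count) or both
in the same colour class. -/
theorem card_lt_pairs_ne {n : ℕ} (c : Fin n → Fin 3) :
    2 * #{p : Fin n × Fin n | p.1 < p.2 ∧ c p.1 ≠ c p.2} + ∑ i, #{v | c v = i} ^ 2 = n ^ 2 := by
  have hswap : #{p : Fin n × Fin n | p.1 < p.2 ∧ c p.1 ≠ c p.2} =
      #{p : Fin n × Fin n | p.2 < p.1 ∧ c p.1 ≠ c p.2} :=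
    card_equiv (Equiv.prodComm _ _) (fun p => by simp [ne_comm])
  have hne : #{p : Fin n × Fin n | c p.1 ≠ c p.2} =
      #{p : Fin n × Fin n | p.1 < p.2 ∧ c p.1 ≠ c p.2} +
      #{p : Fin n × Fin n | p.2 < p.1 ∧ c p.1 ≠ c p.2} := by
    rw [← card_union_of_disjoint]
    · congr 1
      ext p
      simp only [mem_filter, mem_univ, true_and, mem_union, ← or_and_right]
      refine ⟨fun h => ⟨lt_or_gt_of_ne fun e => h (by rw [e]), h⟩, And.right⟩
    · rw [disjoint_filter]
      exact fun p _ h h' => absurd h.1 h'.1.not_gt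
  have heq : #{p : Fin n × Fin n | c p.1 = c p.2} = ∑ i, #{v | c v = i} ^ 2 := by
    rw [card_eq_sum_card_fiberwise (f := fun p : Fin n × Fin n => c p.1) (t := univ)
      (fun _ _ => by simp)]
    refine sum_congr rfl fun i _ => ?_
    rw [sq, ← card_product]
    congr 1
    ext p
    simp only [mem_filter, mem_univ, true_and, mem_product]
    constructor
    · rintro ⟨h, h'⟩; exact ⟨h', h ▸ h'⟩
    · rintro ⟨h, h'⟩; exact ⟨h.trans h'.symm, h⟩
  have htot := card_filter_add_card_filter_not (s := (univ : Finset (Fin n × Fin n)))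
    (fun p => c p.1 = c p.2)
  rw [card_univ, Fintype.card_prod, Fintype.card_fin] at htot
  simp only [← ne_eq] at htot
  rw [← heq, sq]
  omega

/-- Arithmetic of `φ_max`: `m` lists the class sizes of an equitable 3-colouring of `n` points and
`N` is the number of bichromatic unordered pairs. -/
theorem equitable_count {n N : ℕ} (m : Fin 3 → ℕ) (hsum : ∑ i, m i = n)
    (hm : ∀ i j, m i ≤ m j + 1) (hN : 2 * N + ∑ i, m i ^ 2 = n ^ 2) :
    N = Nat.choose n 2 - (n / 3) * (n % 3) - 3 * Nat.choose (n / 3) 2 := by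
  simp only [Fin.sum_univ_three] at hsum hN
  have two_choose : ∀ k : ℕ, 2 * k.choose 2 + k = k ^ 2 := by
    intro k
    induction k with
    | zero => simp
    | succ k ih => rw [Nat.choose_succ_succ' k 1, Nat.choose_one_right]; linarith
  have hn := two_choose n
  have hv := two_choose (n / 3)
  suffices h : N + (n / 3) * (n % 3) + 3 * Nat.choose (n / 3) 2 = n.choose 2 by omega
  obtain ⟨v, hvdef⟩ : ∃ v, v = n / 3 := ⟨_, rfl⟩
  have h01 := hm 0 1
  have h02 := hm 0 2
  have h10 := hm 1 0
  have h12 := hm 1 2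
  have h20 := hm 2 0
  have h21 := hm 2 1
  generalize n.choose 2 = A at *
  rw [← hvdef] at hv ⊢
  generalize v.choose 2 = B at *
  generalize hw : n % 3 = w at *
  have hnv : n = 3 * v + w := by omega
  have c0 : m 0 = v ∨ m 0 = v + 1 := by omega
  have c1 : m 1 = v ∨ m 1 = v + 1 := by omega
  have c2 : m 2 = v ∨ m 2 = v + 1 := by omega
  rcases c0 with c0 | c0 <;> rcases c1 with c1 | c1 <;> rcases c2 with c2 | c2 <;>
    rw [c0, c1, c2] at hN hsum
  · obtain rfl : w = 0 := by omega
    subst hnv; linarith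
  · obtain rfl : w = 1 := by omega
    subst hnv; linarith
  · obtain rfl : w = 1 := by omega
    subst hnv; linarith
  · obtain rfl : w = 2 := by omega
    subst hnv; linarith
  · obtain rfl : w = 1 := by omega
    subst hnv; linarith
  · obtain rfl : w = 2 := by omega
    subst hnv; linarith
  · obtain rfl : w = 2 := by omega
    subst hnv; linarith
  -- All three classes of size `v + 1` would give `n = 3 * v + 3`.
  · omega

/-- The three nonzero vectors of `GF(2)²`, used as the three colours. -/
def colourVec : Fin 3 → Fin 2 → ZMod 2 := ![![1, 0], ![0, 1], ![1, 1]]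

theorem colourVec_injective : Function.Injective colourVec := by decide

theorem colourVec_ne_zero : ∀ i, colourVec i ≠ 0 := by decide

/-- Two distinct nonzero vectors of `GF(2)²` are linearly independent, so two colours force rank 2. -/
theorem rank_colourVec {n : ℕ} (c : Fin n → Fin 3) (j k : Fin n) (h : c j ≠ c k) :
    (Matrix.of fun i j => colourVec (c j) i).rank = 2 := by
  have key : ∀ a b : Fin 3, a ≠ b → ∀ g : Fin 2 → ZMod 2,
      g 0 * colourVec a 0 + g 1 * colourVec a 1 = 0 →
      g 0 * colourVec b 0 + g 1 * colourVec b 1 = 0 → ∀ i, g i = 0 := by decide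
  have hli : LinearIndependent (ZMod 2)
      (Matrix.of fun i j => colourVec (c j) i : Matrix (Fin 2) (Fin n) (ZMod 2)).row := by
    rw [Fintype.linearIndependent_iff]
    intro g hg
    refine key _ _ h g ?_ ?_
    · simpa [Fin.sum_univ_two] using congrFun hg j
    · simpa [Fin.sum_univ_two] using congrFun hg k
  simpa using hli.rank_matrix

/-- Corollary 4: if the requirements graph `G` is acyclic with every vertex of degree
at most 4, then a `2^n` factorial in blocks of size four exists which yields all
required estimates and achieves the bound `φ_max = C(n,2) - v·w - 3·C(v,2)` with
`v = n / 3`, `w = n % 3`. -/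
theorem stmt12 (n : ℕ) (hn : 2 ≤ n)
    (G : SimpleGraph (Fin n)) [DecidableRel G.Adj]
    (hG : G.IsAcyclic)
    (hd : ∀ v : Fin n, G.degree v ≤ 4) :
    ∃ X : Matrix (Fin 2) (Fin n) (ZMod 2),
      X.rank = 2 ∧
      (∀ j : Fin n, (fun i => X i j) ≠ 0) ∧
      (∀ j k : Fin n, G.Adj j k → (fun i => X i j) ≠ (fun i => X i k)) ∧
      (Finset.univ.filter
          (fun p : Fin n × Fin n =>
            p.1 < p.2 ∧ (fun i => X i p.1) ≠ (fun i => X i p.2))).card =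
        Nat.choose n 2 - (n / 3) * (n % 3) - 3 * Nat.choose (n / 3) 2 := by
  obtain ⟨c, hc, hcount⟩ := exists_equitable_on G (exists_adj_card_le_one G hG) Finset.univ
    (fun v _ => by
      rw [← G.neighborFinset_eq_filter]
      exact hd v)
  have hsum : ∑ i, (Finset.univ.filter fun v => c v = i).card = n := by
    rw [← Finset.card_eq_sum_card_fiberwise (fun _ _ => by simp)]
    simp
  obtain ⟨j, k, hjk⟩ : ∃ j k, c j ≠ c k := by
    -- a constant colouring would have classes of sizes `n ≥ 2` and `0`
    by_contra! h
    have h0 : c ⟨0, by omega⟩ + 1 ≠ c ⟨0, by omega⟩ := by simp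
    have h1 := hcount (c ⟨0, by omega⟩) (c ⟨0, by omega⟩ + 1)
    rw [Finset.filter_true_of_mem (fun v _ => h v _),
      Finset.filter_false_of_mem (fun v _ => by rw [h v ⟨0, by omega⟩]; exact h0.symm)] at h1
    simp at h1
    omega
  refine ⟨Matrix.of fun i j => colourVec (c j) i, rank_colourVec c j k hjk,
    fun j => colourVec_ne_zero _,
    fun j k h => colourVec_injective.ne (hc j (Finset.mem_univ _) k (Finset.mem_univ _) h), ?_⟩
  rw [← equitable_count _ hsum hcount (card_lt_pairs_ne c)]
  congr 1
  ext p
  simp only [Finset.mem_filter, Finset.mem_univ, true_and]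
  exact and_congr_right fun _ => colourVec_injective.ne_iff
end

section
/- Let S be a set of five pairwise distinct nonzero vectors in Fin 3 → ZMod 2. Then the sum (over ZMod 2) of the five vectors in S is itself nonzero and is an element of S. -/
/-! The sum of all eight vectors of `Fin 3 → ZMod 2` is zero, and the complement of `S` is
`{0, a, b}` with `a`, `b` distinct and nonzero. Hence the sum over `S` is `-(0 + a + b) = a + b`,
the third point of the line through `a` and `b`: it differs from `0`, `a` and `b`, so it is not in
the complement of `S`. -/

/-- If `S` is a set of five pairwise distinct nonzero vectors of `Fin 3 → ZMod 2`, then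
the sum of the vectors of `S` is nonzero and is itself an element of `S` (so the sixth
column of the generator matrix duplicates one of the five chosen columns). -/
theorem stmt15 (S : Finset (Fin 3 → ZMod 2)) (hcard : S.card = 5)
    (h0 : ∀ v ∈ S, v ≠ 0) :
    (∑ v ∈ S, v) ≠ 0 ∧ (∑ v ∈ S, v) ∈ S := by
  have h0c : (0 : Fin 3 → ZMod 2) ∈ Sᶜ := by
    rw [Finset.mem_compl]
    exact fun h => h0 0 h rfl
  have hT : (Sᶜ.erase 0).card = 2 := by
    rw [Finset.card_erase_of_mem h0c, Finset.card_compl, hcard]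
    simp
  obtain ⟨a, b, hab, hTab⟩ := Finset.card_eq_two.mp hT
  have ha : a ≠ 0 := Finset.ne_of_mem_erase (s := Sᶜ) (by simp [hTab])
  have hb : b ≠ 0 := Finset.ne_of_mem_erase (s := Sᶜ) (by simp [hTab])
  have huniv : ∑ v : Fin 3 → ZMod 2, v = 0 := by decide
  have hneg : ∀ v : Fin 3 → ZMod 2, -v = v := by decide
  have hsum : ∑ v ∈ S, v = a + b := by
    have h := Finset.sum_add_sum_compl S (fun v => v)
    rw [huniv, ← Finset.add_sum_erase _ _ h0c, hTab, Finset.sum_pair hab, zero_add] at h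
    rw [eq_neg_of_add_eq_zero_left h, hneg]
  have hne : a + b ≠ 0 := fun h => hab (by rw [eq_neg_of_add_eq_zero_left h, hneg])
  rw [hsum]
  refine ⟨hne, ?_⟩
  by_contra hS
  have hmem : a + b ∈ Sᶜ.erase 0 := Finset.mem_erase.mpr ⟨hne, Finset.mem_compl.mpr hS⟩
  rw [hTab] at hmem
  simp [ha, hb] at hmem
end
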